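/- Let Ω ⊂ ℝ^d be a bounded Lipschitz domain, P ∈ ∂Ω, r > 0, and suppose that for some constants C₀ > C₁ > 10 one has Ω ⊂ B(P, C₀r) and B(P, C₁r) ∩ Ω = B(P, C₁r) ∩ {(x′, x_d) : x_d > η(x′)} for a Lipschitz function η : ℝ^{d−1} → ℝ. Then there exist two regular families of truncated nontangential cones {γ(Q) : Q ∈ ∂Ω} and {γ̃(Q) : Q ∈ ∂Ω}, a compact set K ⊂ Ω, and a constant C, such that for every function u biharmonic in Ω and every Q ∈ B(P, 5r) ∩ ∂Ω: S(∇u)(Q) ≤ C·{ S̃(D_d u)(Q) + sup_K |∇u| }, where S and S̃ are the square functions defined using the cones γ(Q) and γ̃(Q) respectively. -/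

import Mathlib

open MeasureTheory Metric Filter Set
open scoped ENNReal NNReal Topology RealInnerProductSpace

noncomputable section

/-- Euclidean space `ℝ^d`. -/
abbrev Euc (d : ℕ) := EuclideanSpace ℝ (Fin d)

variable {d : ℕ}

/-- The partial derivative `D_i u` in the `i`-th coordinate direction. -/
def pder (i : Fin d) (u : Euc d → ℝ) : Euc d → ℝ :=
  fun x => fderiv ℝ u x (EuclideanSpace.single i 1)

/-- The Laplacian `Δu = ∑ i, D_i D_i u`. -/
def lap (u : Euc d → ℝ) : Euc d → ℝ := fun x => ∑ i, pder i (pder i u) x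

/-- The bilaplacian `Δ²u`. -/
def bilap (u : Euc d → ℝ) : Euc d → ℝ := lap (lap u)

/-- `u` is biharmonic in the open set `Ω` : it is smooth there and `Δ²u = 0`. -/
def Biharmonic (Ω : Set (Euc d)) (u : Euc d → ℝ) : Prop :=
  ContDiffOn ℝ (⊤ : ℕ∞) u Ω ∧ ∀ x ∈ Ω, bilap u x = 0

/-- `|∇u|`. -/
def gnorm1 (u : Euc d → ℝ) : Euc d → ℝ :=
  fun x => Real.sqrt (∑ i, (pder i u x) ^ 2)

/-- `|∇²u|`. -/
def gnorm2 (u : Euc d → ℝ) : Euc d → ℝ :=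
  fun x => Real.sqrt (∑ i, ∑ j, (pder i (pder j u) x) ^ 2)

/-- `|∇³u|`. -/
def gnorm3 (u : Euc d → ℝ) : Euc d → ℝ :=
  fun x => Real.sqrt (∑ i, ∑ j, ∑ k, (pder i (pder j (pder k u)) x) ^ 2)

/-- The last ("vertical") coordinate `x_d` of a point of `ℝ^d`. -/
def vertCoord (d : ℕ) (x : Euc d) : ℝ :=
  if h : 0 < d then x ⟨d - 1, Nat.sub_lt h one_pos⟩ else 0

/-- The vertical unit vector `e_d`. -/
def vertDir (d : ℕ) : Euc d :=
  if h : 0 < d then EuclideanSpace.single ⟨d - 1, Nat.sub_lt h one_pos⟩ 1 else 0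

/-- The horizontal coordinates `x′` of a point of `ℝ^d`. -/
def graphCoord (d : ℕ) (x : Euc d) : Euc (d - 1) :=
  WithLp.toLp 2 fun i => x (Fin.castLE (Nat.sub_le d 1) i)

/-- The partial derivative `D_d u` in the vertical direction. -/
def pdLast (u : Euc d → ℝ) : Euc d → ℝ := fun x => fderiv ℝ u x (vertDir d)

/-- A bounded Lipschitz domain: a bounded connected open set whose boundary is covered by
finitely many open sets, in each of which, after a rigid motion, the boundary is the graph of
a Lipschitz function and the domain lies above the graph. -/
def IsLipschitzDomain (Ω : Set (Euc d)) : Prop :=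
  IsOpen Ω ∧ Bornology.IsBounded Ω ∧ IsConnected Ω ∧
  ∃ (N : ℕ) (U : Fin N → Set (Euc d)),
    (∀ i, IsOpen (U i)) ∧ (frontier Ω ⊆ ⋃ i, U i) ∧
    ∀ i, ∃ (R : Euc d ≃ᵢ Euc d) (M : ℝ≥0) (η : Euc (d - 1) → ℝ),
      LipschitzWith M η ∧
      U i ∩ Ω = U i ∩ (R ⁻¹' {x | η (graphCoord d x) < vertCoord d x}) ∧
      U i ∩ frontier Ω = U i ∩ (R ⁻¹' {x | vertCoord d x = η (graphCoord d x)})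

/-- The nontangential approach cone (aperture 1) with vertex `Q ∈ ∂Ω`. -/
def ntCone (Ω : Set (Euc d)) (Q : Euc d) : Set (Euc d) :=
  {x | x ∈ Ω ∧ dist x Q < 2 * Metric.infDist x (frontier Ω)}

/-- The nontangential maximal function `(w)*`. -/
def ntMax (Ω : Set (Euc d)) (w : Euc d → ℝ) (Q : Euc d) : ℝ≥0∞ :=
  ⨆ x ∈ ntCone Ω Q, (‖w x‖₊ : ℝ≥0∞)

/-- `w` has nontangential limit `L` at the boundary point `Q`. -/
def NTLim (Ω : Set (Euc d)) (w : Euc d → ℝ) (Q : Euc d) (L : ℝ) : Prop :=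
  Filter.Tendsto w (nhdsWithin Q (ntCone Ω Q)) (nhds L)

/-- The surface measure on `∂Ω`: the `(d-1)`-dimensional Hausdorff measure restricted
to the boundary. -/
def sMeasure (Ω : Set (Euc d)) : Measure (Euc d) :=
  (μH[(d : ℝ) - 1]).restrict (frontier Ω)

/-- The `L^p(∂Ω)` norm of the nontangential maximal function of `w`. -/
def ntMaxLp (Ω : Set (Euc d)) (w : Euc d → ℝ) (p : ℝ) : ℝ≥0∞ :=
  (∫⁻ Q, (ntMax Ω w Q) ^ p ∂(sMeasure Ω)) ^ (1 / p)

/-- The `L^p(∂Ω, σ)` norm of a function. -/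
def bLp (Ω : Set (Euc d)) (f : Euc d → ℝ) (p : ℝ) : ℝ≥0∞ :=
  eLpNorm f (ENNReal.ofReal p) (sMeasure Ω)

/-- A test function: smooth with compact support in `ℝ^d`. -/
def TestFun (f : Euc d → ℝ) : Prop := ContDiff ℝ (⊤ : ℕ∞) f ∧ HasCompactSupport f

/-- `u` has boundary data `(D^α f)_{|α| ≤ 1}` in the sense of nontangential convergence
`σ`-a.e. on `∂Ω`. -/
def HasBVals1 (Ω : Set (Euc d)) (u f : Euc d → ℝ) : Prop :=
  ∀ᵐ Q ∂(sMeasure Ω), NTLim Ω u Q (f Q) ∧ ∀ i, NTLim Ω (pder i u) Q (pder i f Q)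

/-- `n` is the (σ-a.e. defined) outward unit normal of `Ω`, characterized by the
Gauss–Green formula. -/
def IsOutwardNormal (Ω : Set (Euc d)) (n : Euc d → Euc d) : Prop :=
  (∀ᵐ Q ∂(sMeasure Ω), ‖n Q‖ = 1) ∧
  ∀ φ : Euc d → Euc d, ContDiff ℝ (⊤ : ℕ∞) φ → HasCompactSupport φ →
    ∫ x in Ω, (∑ i, pder i (fun y => φ y i) x) = ∫ Q, (inner ℝ (φ Q) (n Q) : ℝ) ∂(sMeasure Ω)

/-- `|∇_t h|`, the norm of the tangential gradient `∇h − (∇h·n)n` of `h` on `∂Ω`. -/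
def tgradNorm (n : Euc d → Euc d) (h : Euc d → ℝ) (Q : Euc d) : ℝ :=
  Real.sqrt (∑ i, (pder i h Q - (∑ j, n Q j * pder j h Q) * n Q i) ^ 2)

/-- `|∇_t ∇f|`, the norm of the tangential gradient of the full gradient of `f`. -/
def tgrad2Norm (n : Euc d → Euc d) (f : Euc d → ℝ) (Q : Euc d) : ℝ :=
  Real.sqrt (∑ k, (tgradNorm n (pder k f) Q) ^ 2)

/-- Unique solvability of the `L^q` Dirichlet problem `(D)_q` for `Δ²u = 0` in `Ω`:
existence, with uniform estimate, of solutions with Whitney-array boundary data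
`(D^α f)_{|α|≤1}`, together with uniqueness. -/
def DirichletSolvable (Ω : Set (Euc d)) (q : ℝ) : Prop :=
  (∃ C : ℝ≥0, ∀ f : Euc d → ℝ, TestFun f →
    ∃ u : Euc d → ℝ, Biharmonic Ω u ∧ ntMaxLp Ω (gnorm1 u) q < ⊤ ∧ HasBVals1 Ω u f ∧
      ntMaxLp Ω (gnorm1 u) q + ntMaxLp Ω u q ≤
        C * (bLp Ω f q + ∑ i : Fin d, bLp Ω (pder i f) q)) ∧
  (∀ u : Euc d → ℝ, Biharmonic Ω u → ntMaxLp Ω (gnorm1 u) q < ⊤ →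
    HasBVals1 Ω u (fun _ => 0) → ∀ x ∈ Ω, u x = 0)

/-- Unique solvability of the `L^p` regularity problem `(R)_p` for `Δ²u = 0` in `Ω`:
existence, with uniform estimate, of solutions with Whitney-array boundary data
`(D^α g)_{|α|≤2}`, together with uniqueness. -/
def RegularitySolvable (Ω : Set (Euc d)) (p : ℝ) : Prop :=
  (∃ (n : Euc d → Euc d) (C : ℝ≥0), IsOutwardNormal Ω n ∧
    ∀ g : Euc d → ℝ, TestFun g →
    ∃ u : Euc d → ℝ, Biharmonic Ω u ∧ ntMaxLp Ω (gnorm2 u) p < ⊤ ∧ HasBVals1 Ω u g ∧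
      ntMaxLp Ω (gnorm2 u) p ≤
        C * ((∑ i : Fin d, bLp Ω (tgradNorm n (pder i g)) p) + bLp Ω g p +
          ∑ i : Fin d, bLp Ω (pder i g) p)) ∧
  (∀ u : Euc d → ℝ, Biharmonic Ω u → ntMaxLp Ω (gnorm2 u) p < ⊤ →
    HasBVals1 Ω u (fun _ => 0) → ∀ x ∈ Ω, u x = 0)

/-- `u` is the solution of the `L²` regularity problem in `Ω` with boundary data
`(D^α f)_{|α|≤1}`. -/
def IsL2Sol (Ω : Set (Euc d)) (f u : Euc d → ℝ) : Prop :=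
  Biharmonic Ω u ∧ ntMaxLp Ω (gnorm2 u) 2 < ⊤ ∧ HasBVals1 Ω u f

open Classical in
/-- The solution of the `L²` regularity problem with data `f` (junk value if none exists). -/
def L2Sol (Ω : Set (Euc d)) (f : Euc d → ℝ) : Euc d → ℝ :=
  if h : ∃ u, IsL2Sol Ω f u then h.choose else 0

/-- The bilinear form `Λ[f,g] = −∫_Ω Δu·Δv`, where `u, v` solve the `L²` regularity
problem with data `f, g`. -/
def biForm (Ω : Set (Euc d)) (f g : Euc d → ℝ) : ℝ :=
  - ∫ x in Ω, lap (L2Sol Ω f) x * lap (L2Sol Ω g) x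

/-- The bilinear estimate `|Λ[f,g]| ≤ C (‖∇_t∇f‖_p + ‖∇f‖_p + ‖f‖_p)(‖∇g‖_q + ‖g‖_q)`
for all test functions `f, g`. -/
def BilinearEstimate (Ω : Set (Euc d)) (p q : ℝ) : Prop :=
  ∃ (n : Euc d → Euc d) (C : ℝ≥0), IsOutwardNormal Ω n ∧
    ∀ f g : Euc d → ℝ, TestFun f → TestFun g →
      (‖biForm Ω f g‖₊ : ℝ≥0∞) ≤
        C * (bLp Ω (tgrad2Norm n f) p + bLp Ω (gnorm1 f) p + bLp Ω f p) *
          (bLp Ω (gnorm1 g) q + bLp Ω g q)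

/-- A regular family of truncated nontangential cones for `Ω`: cones of a fixed aperture
and height with vertices at the boundary points. -/
def IsRegularConeFamily (Ω : Set (Euc d)) (γ : Euc d → Set (Euc d)) : Prop :=
  ∃ a : ℝ, 0 < a ∧ ∃ h : ℝ, 0 < h ∧ ∀ Q ∈ frontier Ω,
    γ Q = {x | x ∈ Ω ∧ dist x Q < (1 + a) * Metric.infDist x (frontier Ω) ∧ dist x Q < h}

/-- The square function associated with the cone family `γ`, applied to a function whose
gradient has pointwise norm `g`: `(∫_{γ(Q)} g(x)² |x − Q|^{2−d} dx)^{1/2}`. -/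
def sqFunOf (γ : Euc d → Set (Euc d)) (g : Euc d → ℝ) (Q : Euc d) : ℝ≥0∞ :=
  (∫⁻ x in γ Q, ((‖g x‖₊ : ℝ≥0∞)) ^ 2 * (edist x Q) ^ ((2 : ℝ) - d)) ^ ((1 : ℝ) / 2)

theorem lintegral_edist_rpow_indicator (hd : 2 ≤ d) (Q : Euc d) (S : Set ℝ) (hS : MeasurableSet S)
    (p : ℝ) (hint : IntegrableOn (fun y : ℝ => y ^ (p + d - 1)) (S ∩ Ioi 0)) :
    ∫⁻ x in {x | dist x Q ∈ S}, edist x Q ^ p =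
      ENNReal.ofReal (d * volume.real (ball (0 : Euc d) 1) *
        ∫ y in S ∩ Ioi 0, y ^ (p + d - 1)) := by
  have : Nonempty (Fin d) := ⟨⟨0, by omega⟩⟩
  have hfin : Module.finrank ℝ (Euc d) = d := finrank_euclideanSpace_fin
  have hmS : MeasurableSet {x : Euc d | dist x Q ∈ S} :=
    (measurable_id.dist measurable_const) hS
  set f : ℝ → ℝ := S.indicator (fun y => y ^ p) with hf
  have hae : ∀ᵐ x : Euc d, x ≠ Q := by
    simp [ae_iff]
  have h1 : ∫⁻ x in {x | dist x Q ∈ S}, edist x Q ^ p =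
      ∫⁻ x : Euc d, ENNReal.ofReal (f ‖x - Q‖) := by
    rw [← lintegral_indicator hmS]
    refine lintegral_congr_ae ?_
    filter_upwards [hae] with x hx
    have hpos : 0 < dist x Q := dist_pos.2 hx
    by_cases hxS : dist x Q ∈ S
    · rw [indicator_of_mem (by exact hxS), hf, ← dist_eq_norm, indicator_of_mem hxS,
        edist_dist, ENNReal.ofReal_rpow_of_pos hpos]
    · rw [indicator_of_notMem (by exact hxS), hf, ← dist_eq_norm, indicator_of_notMem hxS]
      simp
  have hsm : ∀ y ∈ Ioi (0 : ℝ), y ^ (d - 1) • f y = S.indicator (fun y => y ^ (p + d - 1)) y := by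
    intro y hy
    have hy : 0 < y := hy
    by_cases hyS : y ∈ S
    · rw [hf, indicator_of_mem hyS, indicator_of_mem hyS, smul_eq_mul, ← Real.rpow_natCast,
        ← Real.rpow_add hy, Nat.cast_sub (by omega)]
      congr 1; push_cast; ring
    · rw [hf, indicator_of_notMem hyS, indicator_of_notMem hyS]; simp
  have hI : Integrable (fun x : Euc d => f ‖x‖) := by
    rw [integrable_fun_norm_addHaar, hfin]
    rw [integrableOn_congr_fun hsm measurableSet_Ioi]
    rw [IntegrableOn, integrable_indicator_iff hS, IntegrableOn, Measure.restrict_restrict hS]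
    exact hint
  rw [h1, lintegral_sub_right_eq_self (fun x : Euc d => ENNReal.ofReal (f ‖x‖)) Q,
    ← ofReal_integral_eq_lintegral_ofReal hI, integral_fun_norm_addHaar, hfin,
    setIntegral_congr_fun measurableSet_Ioi hsm, integral_indicator hS,
    Measure.restrict_restrict hS]
  · congr 1; simp [mul_assoc]
  · refine Eventually.of_forall fun x => ?_
    simp only [hf]
    exact indicator_apply_nonneg fun _ => by positivity

theorem lintegral_closedBall_edist_rpow (hd : 2 ≤ d) {α : ℝ} (hα : 0 < α) :
    ∃ C : ℝ≥0, ∀ (Q : Euc d) (R : ℝ), 0 < R →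
      ∫⁻ x in {x | dist x Q ≤ R}, edist x Q ^ (α - d) ≤ C * ENNReal.ofReal R ^ α := by
  refine ⟨(d * volume.real (ball (0 : Euc d) 1) / α).toNNReal, fun Q R hR => ?_⟩
  have hset : Iic R ∩ Ioi 0 = Ioc 0 R := by ext; simp [and_comm]
  have hexp : α - d + d - 1 = α - 1 := by ring
  have hi : IntervalIntegrable (fun y : ℝ => y ^ (α - 1)) volume 0 R :=
    intervalIntegral.intervalIntegrable_rpow' (by linarith)
  have := lintegral_edist_rpow_indicator hd Q (Iic R) measurableSet_Iic (α - d) (by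
    rw [hset, hexp]; exact (intervalIntegrable_iff_integrableOn_Ioc_of_le hR.le).1 hi)
  rw [hset, hexp, ← intervalIntegral.integral_of_le hR.le, integral_rpow (Or.inl (by linarith))]
    at this
  simp only [mem_Iic] at this
  rw [this, ENNReal.ofReal_rpow_of_pos hR, ← ENNReal.ofReal, ← ENNReal.ofReal_mul (by positivity)]
  refine le_of_eq (congrArg _ ?_)
  rw [sub_add_cancel, Real.zero_rpow hα.ne']; ring

theorem lintegral_compl_ball_edist_rpow (hd : 2 ≤ d) {α : ℝ} (hα : 0 < α) :
    ∃ C : ℝ≥0, ∀ (Q : Euc d) (R : ℝ), 0 < R →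
      ∫⁻ x in {x | R ≤ dist x Q}, edist x Q ^ (-α - d) ≤ C * ENNReal.ofReal R ^ (-α) := by
  refine ⟨(d * volume.real (ball (0 : Euc d) 1) / α).toNNReal, fun Q R hR => ?_⟩
  have hset : Ici R ∩ Ioi 0 = Ici R := inter_eq_left.2 fun x hx => hR.trans_le hx
  have hexp : -α - d + d - 1 = -α - 1 := by ring
  have := lintegral_edist_rpow_indicator hd Q (Ici R) measurableSet_Ici (-α - d) (by
    rw [hset, hexp, integrableOn_Ici_iff_integrableOn_Ioi]
    exact integrableOn_Ioi_rpow_of_lt (by linarith) hR)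
  rw [hset, hexp, integral_Ici_eq_integral_Ioi, integral_Ioi_rpow_of_lt (by linarith) hR] at this
  simp only [mem_Ici] at this
  rw [this, ENNReal.ofReal_rpow_of_pos hR, ← ENNReal.ofReal, ← ENNReal.ofReal_mul (by positivity)]
  refine le_of_eq (congrArg _ ?_)
  rw [sub_add_cancel]; field_simp

theorem lintegral_mul_sq_le {α : Type*} [MeasurableSpace α] (μ : Measure α) {f g : α → ℝ≥0∞}
    (hf : AEMeasurable f μ) (hg : AEMeasurable g μ) :
    (∫⁻ a, f a * g a ∂μ) ^ 2 ≤ (∫⁻ a, f a ^ 2 ∂μ) * ∫⁻ a, g a ^ 2 ∂μ := by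
  have h := ENNReal.lintegral_mul_le_Lp_mul_Lq μ Real.HolderConjugate.two_two hf hg
  simp only [Pi.mul_apply, ENNReal.rpow_two] at h
  calc (∫⁻ a, f a * g a ∂μ) ^ 2
      ≤ ((∫⁻ a, f a ^ 2 ∂μ) ^ ((1 : ℝ) / 2) * (∫⁻ a, g a ^ 2 ∂μ) ^ ((1 : ℝ) / 2)) ^ 2 := by
        gcongr
    _ = _ := by
        rw [mul_pow, ← ENNReal.rpow_two, ← ENNReal.rpow_two, ← ENNReal.rpow_mul,
          ← ENNReal.rpow_mul]
        norm_num

/-- A weighted Hardy inequality, with respect to the distance to a point `Q`. -/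
theorem lintegral_hardy (hd : 2 ≤ d) {A : ℝ} (hA : 0 < A) :
    ∃ C : ℝ≥0, ∀ (Q : Euc d) (f : Euc d → ℝ≥0∞), Measurable f →
      ∫⁻ x, (∫⁻ z in {z | dist x Q ≤ A * dist z Q}, f z * edist z Q ^ (-(d : ℝ))) ^ 2 *
          edist x Q ^ ((2 : ℝ) - d) ≤
        C * ∫⁻ z, f z ^ 2 * edist z Q ^ ((2 : ℝ) - d) := by
  have : Nonempty (Fin d) := ⟨⟨0, by omega⟩⟩
  obtain ⟨C₁, h₁⟩ := lintegral_compl_ball_edist_rpow hd (α := 1 / 2) (by norm_num)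
  obtain ⟨C₂, h₂⟩ := lintegral_closedBall_edist_rpow hd (α := 3 / 2) (by norm_num)
  set B : ℝ≥0∞ := C₁ * ENNReal.ofReal A⁻¹ ^ (-(1 / 2 : ℝ)) with hB
  set D : ℝ≥0∞ := C₂ * ENNReal.ofReal A ^ (3 / 2 : ℝ) with hD
  have hA0 : ENNReal.ofReal A ≠ 0 := by simpa using hA
  have hA1 : ENNReal.ofReal A⁻¹ ≠ 0 := by simpa using hA
  have hBt : B ≠ ⊤ := ENNReal.mul_ne_top ENNReal.coe_ne_top
    (ENNReal.rpow_ne_top_of_ne_zero hA1 ENNReal.ofReal_ne_top)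
  have hDt : D ≠ ⊤ := ENNReal.mul_ne_top ENNReal.coe_ne_top
    (ENNReal.rpow_ne_top_of_ne_zero hA0 ENNReal.ofReal_ne_top)
  clear_value B D
  refine ⟨(B * D).toNNReal, fun Q f hf => ?_⟩
  rw [ENNReal.coe_toNNReal (ENNReal.mul_ne_top hBt hDt)]
  have hae : ∀ᵐ x : Euc d, x ≠ Q := by simp [ae_iff]
  have hN0 : ∀ x : Euc d, x ≠ Q → edist x Q ≠ 0 := fun x hx => by simpa using hx
  have hNt : ∀ x : Euc d, edist x Q ≠ ⊤ := fun x => edist_ne_top _ _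
  have hmN : ∀ p : ℝ, Measurable fun z : Euc d => edist z Q ^ p := fun p =>
    (measurable_id.edist measurable_const).pow_const p
  set E : Set (Euc d × Euc d) := {p | dist p.1 Q ≤ A * dist p.2 Q} with hE
  have hmE : MeasurableSet E := measurableSet_le (measurable_fst.dist measurable_const)
    ((measurable_snd.dist measurable_const).const_mul A)
  have hmz : ∀ x, MeasurableSet {z : Euc d | dist x Q ≤ A * dist z Q} := fun x =>
    measurable_prodMk_left hmE
  have hmx : ∀ z, MeasurableSet {x : Euc d | dist x Q ≤ A * dist z Q} := fun z =>
    measurable_prodMk_right hmE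
  have hmf : Measurable fun z => f z ^ 2 * edist z Q ^ ((1 / 2 : ℝ) - d) :=
    (hf.pow_const 2).mul (hmN _)
  set Φ : Euc d → Euc d → ℝ≥0∞ := fun x z =>
    f z ^ 2 * edist z Q ^ ((1 / 2 : ℝ) - d) * edist x Q ^ ((3 / 2 : ℝ) - d) with hΦ
  have hmΦ : Measurable (Function.uncurry Φ) := by
    refine Measurable.mul ?_ ((hmN _).comp measurable_fst)
    exact hmf.comp measurable_snd
  calc ∫⁻ x, (∫⁻ z in {z | dist x Q ≤ A * dist z Q}, f z * edist z Q ^ (-(d : ℝ))) ^ 2 *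
          edist x Q ^ ((2 : ℝ) - d)
      ≤ ∫⁻ x, B * ∫⁻ z in {z | dist x Q ≤ A * dist z Q}, Φ x z := by
        refine lintegral_mono_ae ?_
        filter_upwards [hae] with x hx
        have hρ : 0 < dist x Q := dist_pos.2 hx
        have e1 : ∫⁻ z in {z | dist x Q ≤ A * dist z Q}, f z * edist z Q ^ (-(d : ℝ)) =
            ∫⁻ z in {z | dist x Q ≤ A * dist z Q}, (f z * edist z Q ^ ((1 / 4 : ℝ) - d / 2)) *
              edist z Q ^ (-(1 / 4 : ℝ) - d / 2) := by
          refine lintegral_congr_ae (ae_restrict_of_ae ?_)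
          filter_upwards [hae] with z hz
          rw [mul_assoc, ← ENNReal.rpow_add _ _ (hN0 z hz) (hNt z)]
          congr 2; ring
        have e2 : ∀ z : Euc d, (edist z Q ^ (-(1 / 4 : ℝ) - d / 2)) ^ 2 =
            edist z Q ^ (-(1 / 2 : ℝ) - d) := fun z => by
          rw [← ENNReal.rpow_two, ← ENNReal.rpow_mul]; congr 1; ring
        have e3 : ∀ z : Euc d, (f z * edist z Q ^ ((1 / 4 : ℝ) - d / 2)) ^ 2 =
            f z ^ 2 * edist z Q ^ ((1 / 2 : ℝ) - d) := fun z => by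
          rw [mul_pow, ← ENNReal.rpow_two (edist z Q ^ _), ← ENNReal.rpow_mul]
          congr 2; ring
        have e4 : {z : Euc d | dist x Q ≤ A * dist z Q} = {z | dist x Q * A⁻¹ ≤ dist z Q} := by
          ext z; simp only [mem_ofPred_eq]
          rw [mul_comm A, ← div_le_iff₀ hA, div_eq_mul_inv]
        have e5 : ∫⁻ z in {z | dist x Q ≤ A * dist z Q}, edist z Q ^ (-(1 / 2 : ℝ) - d) ≤
            B * edist x Q ^ (-(1 / 2 : ℝ)) := by
          rw [e4]
          refine (h₁ Q _ (by positivity)).trans_eq ?_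
          rw [hB, ENNReal.ofReal_mul hρ.le, ← edist_dist, ENNReal.mul_rpow_of_ne_zero (hN0 x hx) hA1]
          ring
        have e6 := lintegral_mul_sq_le
          (volume.restrict {z : Euc d | dist x Q ≤ A * dist z Q})
          (hf.mul (hmN ((1 / 4 : ℝ) - d / 2))).aemeasurable
          (hmN (-(1 / 4 : ℝ) - d / 2)).aemeasurable
        simp only [Pi.mul_apply, e2, e3] at e6
        calc _ ≤ ((∫⁻ z in {z | dist x Q ≤ A * dist z Q}, f z ^ 2 * edist z Q ^ ((1 / 2 : ℝ) - d)) *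
              (B * edist x Q ^ (-(1 / 2 : ℝ)))) * edist x Q ^ ((2 : ℝ) - d) := by
              rw [e1]; gcongr; exact e6.trans (by gcongr)
          _ = B * ((∫⁻ z in {z | dist x Q ≤ A * dist z Q},
              f z ^ 2 * edist z Q ^ ((1 / 2 : ℝ) - d)) * edist x Q ^ ((3 / 2 : ℝ) - d)) := by
              have : edist x Q ^ ((3 / 2 : ℝ) - d) =
                  edist x Q ^ (-(1 / 2 : ℝ)) * edist x Q ^ ((2 : ℝ) - d) := by
                rw [← ENNReal.rpow_add _ _ (hN0 x hx) (hNt x)]; congr 1; ring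
              rw [this]; ring
          _ = _ := by
              rw [hΦ, lintegral_mul_const _ hmf]
    _ = B * ∫⁻ x, ∫⁻ z, E.indicator (Function.uncurry Φ) (x, z) := by
        rw [lintegral_const_mul' _ _ hBt]
        congr 2; funext x
        rw [← lintegral_indicator (hmz x)]
        rfl
    _ = B * ∫⁻ z, ∫⁻ x, E.indicator (Function.uncurry Φ) (x, z) := by
        rw [lintegral_lintegral_swap]
        exact (hmΦ.indicator hmE).aemeasurable
    _ ≤ B * ∫⁻ z, D * (f z ^ 2 * edist z Q ^ ((2 : ℝ) - d)) := by
        gcongr B * ?_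
        refine lintegral_mono_ae ?_
        filter_upwards [hae] with z hz
        have hρ : 0 < dist z Q := dist_pos.2 hz
        calc ∫⁻ x, E.indicator (Function.uncurry Φ) (x, z)
            = ∫⁻ x in {x | dist x Q ≤ A * dist z Q}, Φ x z := by
              rw [← lintegral_indicator (hmx z)]; rfl
          _ = f z ^ 2 * edist z Q ^ ((1 / 2 : ℝ) - d) *
              ∫⁻ x in {x | dist x Q ≤ A * dist z Q}, edist x Q ^ ((3 / 2 : ℝ) - d) := by
              rw [hΦ, lintegral_const_mul _ (hmN _)]
          _ ≤ f z ^ 2 * edist z Q ^ ((1 / 2 : ℝ) - d) * (D * edist z Q ^ (3 / 2 : ℝ)) := by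
              gcongr
              refine (h₂ Q _ (by positivity)).trans_eq ?_
              rw [hD, ENNReal.ofReal_mul hA.le, ← edist_dist,
                ENNReal.mul_rpow_of_ne_zero hA0 (hN0 z hz)]
              ring
          _ = _ := by
              have : edist z Q ^ ((2 : ℝ) - d) =
                  edist z Q ^ ((1 / 2 : ℝ) - d) * edist z Q ^ (3 / 2 : ℝ) := by
                rw [← ENNReal.rpow_add _ _ (hN0 z hz) (hNt z)]; congr 1; ring
              rw [this]; ring
    _ = _ := by
        rw [lintegral_const_mul' _ _ hDt, mul_assoc]

theorem pder_eventuallyEq {f g : Euc d → ℝ} {x : Euc d} (h : f =ᶠ[𝓝 x] g) (i : Fin d) :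
    pder i f =ᶠ[𝓝 x] pder i g := by
  filter_upwards [h.fderiv (𝕜 := ℝ)] with y hy
  simp [pder, hy]

theorem pder_eqOn {f g : Euc d → ℝ} {Ω : Set (Euc d)} (hΩ : IsOpen Ω) (h : EqOn f g Ω)
    (i : Fin d) : EqOn (pder i f) (pder i g) Ω := fun _ hx =>
  (pder_eventuallyEq (h.eventuallyEq_of_mem (hΩ.mem_nhds hx)) i).eq_of_nhds

theorem lap_eqOn {f g : Euc d → ℝ} {Ω : Set (Euc d)} (hΩ : IsOpen Ω) (h : EqOn f g Ω) :
    EqOn (lap f) (lap g) Ω := fun _ hx =>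
  Finset.sum_congr rfl fun i _ => pder_eqOn hΩ (pder_eqOn hΩ h i) i hx

theorem contDiffOn_pder {f : Euc d → ℝ} {Ω : Set (Euc d)} (hΩ : IsOpen Ω)
    (h : ContDiffOn ℝ (⊤ : ℕ∞) f Ω) (i : Fin d) : ContDiffOn ℝ (⊤ : ℕ∞) (pder i f) Ω :=
  (h.fderiv_of_isOpen hΩ (m := (⊤ : ℕ∞)) (by simp)).clm_apply contDiffOn_const

theorem contDiffOn_lap {f : Euc d → ℝ} {Ω : Set (Euc d)} (hΩ : IsOpen Ω)
    (h : ContDiffOn ℝ (⊤ : ℕ∞) f Ω) : ContDiffOn ℝ (⊤ : ℕ∞) (lap f) Ω :=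
  ContDiffOn.sum fun i _ => contDiffOn_pder hΩ (contDiffOn_pder hΩ h i) i

theorem pder_comm {f : Euc d → ℝ} {Ω : Set (Euc d)} (hΩ : IsOpen Ω)
    (h : ContDiffOn ℝ (⊤ : ℕ∞) f Ω) (i j : Fin d) :
    EqOn (pder i (pder j f)) (pder j (pder i f)) Ω := by
  intro x hx
  have hc : ContDiffAt ℝ (⊤ : ℕ∞) f x := h.contDiffAt (hΩ.mem_nhds hx)
  have hd : DifferentiableAt ℝ (fderiv ℝ f) x :=
    ((h.fderiv_of_isOpen hΩ (m := (⊤ : ℕ∞)) (by simp)).contDiffAt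
      (hΩ.mem_nhds hx)).differentiableAt (by simp)
  have key : ∀ a b : Fin d, pder a (pder b f) x =
      fderiv ℝ (fderiv ℝ f) x (EuclideanSpace.single a 1) (EuclideanSpace.single b 1) := by
    intro a b
    have : HasFDerivAt (pder b f) ((fderiv ℝ (fderiv ℝ f) x).flip (EuclideanSpace.single b 1)) x := by
      refine (hd.hasFDerivAt.clm_apply
        (hasFDerivAt_const (EuclideanSpace.single b (1 : ℝ)) x)).congr_fderiv ?_
      ext z
      simp
    change fderiv ℝ (pder b f) x _ = _
    rw [this.fderiv]
    rfl
  rw [key, key]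
  exact (hc.isSymmSndFDerivAt (by
    rw [minSmoothness_of_isRCLikeNormedField]
    exact WithTop.coe_le_coe.2 (le_top (a := (2 : ℕ∞))))) _ _

theorem lap_pder {f : Euc d → ℝ} {Ω : Set (Euc d)} (hΩ : IsOpen Ω)
    (h : ContDiffOn ℝ (⊤ : ℕ∞) f Ω) (k : Fin d) :
    EqOn (lap (pder k f)) (pder k (lap f)) Ω := by
  intro x hx
  have h1 : pder k (lap f) x = ∑ i, pder k (pder i (pder i f)) x := by
    have hdiff : ∀ i ∈ (Finset.univ : Finset (Fin d)),
        DifferentiableAt ℝ (pder i (pder i f)) x := fun i _ =>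
      ((contDiffOn_pder hΩ (contDiffOn_pder hΩ h i) i).contDiffAt
        (hΩ.mem_nhds hx)).differentiableAt (by simp)
    change fderiv ℝ (fun y => ∑ i, pder i (pder i f) y) x _ = _
    rw [fderiv_fun_sum hdiff, sum_apply]
    rfl
  rw [h1]
  refine Finset.sum_congr rfl fun i _ => ?_
  rw [pder_eqOn hΩ (pder_comm hΩ h i k) i hx, pder_comm hΩ (contDiffOn_pder hΩ h i) i k hx]

theorem biharmonic_pder {f : Euc d → ℝ} {Ω : Set (Euc d)} (hΩ : IsOpen Ω)
    (h : Biharmonic Ω f) (k : Fin d) : Biharmonic Ω (pder k f) := by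
  refine ⟨contDiffOn_pder hΩ h.1 k, fun x hx => ?_⟩
  rw [bilap, lap_eqOn hΩ (lap_pder hΩ h.1 k) hx, lap_pder hΩ (contDiffOn_lap hΩ h.1) k hx,
    pder_eqOn hΩ (f := lap (lap f)) (g := fun _ => 0) h.2 k hx]
  simp [pder]

/-- The radial kernel `(1 - ‖y‖²)₊ ^ n`. -/
def radialKernel (n : ℕ) (y : Euc d) : ℝ := (max (1 - ‖y‖ ^ 2) 0) ^ n

theorem radialKernel_nonneg (n : ℕ) (y : Euc d) : 0 ≤ radialKernel n y := by
  unfold radialKernel; positivity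

theorem radialKernel_le_one (n : ℕ) (y : Euc d) : radialKernel n y ≤ 1 :=
  pow_le_one₀ (le_max_right _ _) (max_le (by nlinarith [norm_nonneg y]) zero_le_one)

theorem radialKernel_eq_zero {n : ℕ} (hn : n ≠ 0) {y : Euc d} (hy : 1 ≤ ‖y‖) :
    radialKernel n y = 0 := by
  rw [radialKernel, max_eq_right (by nlinarith), zero_pow hn]

theorem continuous_radialKernel (n : ℕ) : Continuous (radialKernel n : Euc d → ℝ) := by
  unfold radialKernel; fun_prop

theorem hasCompactSupport_radialKernel {n : ℕ} (hn : n ≠ 0) :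
    HasCompactSupport (radialKernel n : Euc d → ℝ) :=
  HasCompactSupport.intro (isCompact_closedBall 0 1) fun y hy =>
    radialKernel_eq_zero hn (by simpa using (not_le.1 (by simpa using hy)).le)

theorem integral_radialKernel_pos {n : ℕ} (hn : n ≠ 0) :
    0 < ∫ y : Euc d, radialKernel n y := by
  refine (continuous_radialKernel n).integral_pos_of_hasCompactSupport_nonneg_nonzero
    (hasCompactSupport_radialKernel hn) (radialKernel_nonneg n) (x := 0) ?_
  simp [radialKernel]

theorem hasDerivAt_posPart_pow {n : ℕ} (hn : n ≠ 0) (τ : ℝ) :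
    HasDerivAt (fun τ : ℝ => (max τ 0) ^ (n + 1)) ((n + 1) * (max τ 0) ^ n) τ := by
  have hp : ∀ τ : ℝ, HasDerivAt (fun τ : ℝ => τ ^ (n + 1)) ((n + 1) * τ ^ n) τ := fun τ => by
    simpa using hasDerivAt_pow (n + 1) τ
  rcases lt_trichotomy τ 0 with h | h | h
  · rw [max_eq_right h.le, zero_pow hn, mul_zero]
    refine (hasDerivAt_const τ (0 : ℝ)).congr_of_eventuallyEq ?_
    filter_upwards [gt_mem_nhds h] with s hs
    simp [max_eq_right hs.le]
  · subst h
    rw [max_self, zero_pow hn, mul_zero, ← hasDerivWithinAt_univ, ← Iic_union_Ici (a := (0 : ℝ))]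
    refine HasDerivWithinAt.union ?_ ?_
    · refine (hasDerivWithinAt_const 0 _ (0 : ℝ)).congr (fun s hs => ?_) (by simp)
      rw [max_eq_right hs, zero_pow n.succ_ne_zero]
    · have := (hp 0).hasDerivWithinAt (s := Ici 0)
      rw [zero_pow hn, mul_zero] at this
      refine this.congr (fun s hs => ?_) (by simp)
      rw [max_eq_left hs]
  · rw [max_eq_left h.le]
    refine (hp τ).congr_of_eventuallyEq ?_
    filter_upwards [lt_mem_nhds h] with s hs
    rw [max_eq_left hs.le]

theorem hasFDerivAt_radialKernel {n : ℕ} (hn : n ≠ 0) (y : Euc d) :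
    HasFDerivAt (radialKernel (n + 1))
      ((-(2 * (n + 1)) * radialKernel n y) • innerSL ℝ y) y := by
  have h1 : HasFDerivAt (fun y : Euc d => 1 - ‖y‖ ^ 2) (-(2 • innerSL ℝ y)) y :=
    ((hasStrictFDerivAt_norm_sq y).hasFDerivAt).const_sub 1
  have := (hasDerivAt_posPart_pow hn (1 - ‖y‖ ^ 2)).comp_hasFDerivAt y h1
  refine this.congr_fderiv ?_
  ext z
  simp [radialKernel]
  ring

theorem fderiv_radialKernel_single {n : ℕ} (hn : n ≠ 0) (y : Euc d) (i : Fin d) :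
    fderiv ℝ (radialKernel (n + 1)) y (EuclideanSpace.single i 1) =
      -(2 * (n + 1)) * (radialKernel n y * y i) := by
  rw [(hasFDerivAt_radialKernel hn y).fderiv]
  simp [EuclideanSpace.inner_single_right]
  ring

theorem contDiff_pder {f : Euc d → ℝ} (h : ContDiff ℝ (⊤ : ℕ∞) f) (i : Fin d) :
    ContDiff ℝ (⊤ : ℕ∞) (pder i f) :=
  contDiffOn_univ.1 (contDiffOn_pder isOpen_univ (contDiffOn_univ.2 h) i)

theorem contDiff_lap {f : Euc d → ℝ} (h : ContDiff ℝ (⊤ : ℕ∞) f) :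
    ContDiff ℝ (⊤ : ℕ∞) (lap f) :=
  contDiffOn_univ.1 (contDiffOn_lap isOpen_univ (contDiffOn_univ.2 h))

theorem fderiv_apply_eq_sum (f : Euc d → ℝ) (z y : Euc d) :
    fderiv ℝ f z y = ∑ i, y i * pder i f z := by
  conv_lhs => rw [← (EuclideanSpace.basisFun (Fin d) ℝ).sum_repr y]
  simp [pder]

theorem integrable_radialKernel_mul {n : ℕ} (hn : n ≠ 0) {g : Euc d → ℝ} (hg : Continuous g) :
    Integrable fun y => radialKernel n y * g y :=
  ((continuous_radialKernel n).mul hg).integrable_of_hasCompactSupport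
    (hasCompactSupport_radialKernel hn).mul_right

/-- Integration by parts against the radial kernel. -/
theorem integral_radialKernel_mul_coord {n : ℕ} (hn : n ≠ 0) {v : Euc d → ℝ}
    (hv : ContDiff ℝ (⊤ : ℕ∞) v) (x : Euc d) (t : ℝ) (i : Fin d) :
    ∫ y, radialKernel n y * (y i * v (x + t • y)) =
      t / (2 * (n + 1)) * ∫ y, radialKernel (n + 1) y * pder i v (x + t • y) := by
  have hvc : Continuous fun y => v (x + t • y) := hv.continuous.comp (by fun_prop)
  have hpc : Continuous fun y => pder i v (x + t • y) :=
    (contDiff_pder hv i).continuous.comp (by fun_prop)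
  have hvd : ∀ y, HasFDerivAt (fun y => v (x + t • y))
      ((fderiv ℝ v (x + t • y)).comp (t • ContinuousLinearMap.id ℝ (Euc d))) y := fun y =>
    ((hv.differentiable (by simp)) _).hasFDerivAt.comp y
      (((hasFDerivAt_id y).const_smul t).const_add x)
  have hf1 : ∀ y, fderiv ℝ (fun y => v (x + t • y)) y (EuclideanSpace.single i 1) =
      t * pder i v (x + t • y) := fun y => by
    rw [(hvd y).fderiv]; simp [pder]
  have hcoord : Continuous fun y : Euc d => y i := by fun_prop
  have key := integral_mul_fderiv_eq_neg_fderiv_mul_of_integrable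
    (μ := (volume : Measure (Euc d))) (f := fun y => v (x + t • y))
    (g := radialKernel (n + 1)) (v := EuclideanSpace.single i 1)
    (by
      simp only [hf1]
      simpa only [mul_comm] using integrable_radialKernel_mul n.succ_ne_zero (hpc.const_mul t))
    (by
      simp only [fderiv_radialKernel_single hn]
      refine ((integrable_radialKernel_mul hn (hcoord.mul hvc)).const_mul
        (-(2 * (n + 1) : ℝ))).congr (Eventually.of_forall fun y => ?_)
      simp only [Pi.mul_apply]
      ring)
    (by simpa only [mul_comm] using integrable_radialKernel_mul n.succ_ne_zero hvc)
    (fun y _ => (hvd y).differentiableAt)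
    (fun y _ => (hasFDerivAt_radialKernel hn y).differentiableAt)
  simp only [hf1, fderiv_radialKernel_single hn] at key
  have e1 : ∫ y, v (x + t • y) * (-(2 * (n + 1)) * (radialKernel n y * y i)) =
      -(2 * (n + 1)) * ∫ y, radialKernel n y * (y i * v (x + t • y)) := by
    rw [← integral_const_mul]; congr 1; funext y; ring
  have e2 : ∫ y, t * pder i v (x + t • y) * radialKernel (n + 1) y =
      t * ∫ y, radialKernel (n + 1) y * pder i v (x + t • y) := by
    rw [← integral_const_mul]; congr 1; funext y; ring
  rw [e1, e2] at key
  have hpos : (0 : ℝ) < n + 1 := by positivity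
  rw [div_mul_eq_mul_div, eq_div_iff (by positivity)]
  linarith

/-- The radially weighted mean of `u` at scale `t` about `x`. -/
def radialMean (n : ℕ) (u : Euc d → ℝ) (x : Euc d) (t : ℝ) : ℝ :=
  ∫ y, radialKernel n y * u (x + t • y)

theorem radialMean_zero (n : ℕ) (u : Euc d → ℝ) (x : Euc d) :
    radialMean n u x 0 = (∫ y : Euc d, radialKernel n y) * u x := by
  simp [radialMean, integral_mul_const]

theorem hasDerivAt_radialMean {n : ℕ} (hn : n ≠ 0) {u : Euc d → ℝ}
    (hu : ContDiff ℝ (⊤ : ℕ∞) u) (x : Euc d) (t : ℝ) :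
    HasDerivAt (radialMean n u x) (t / (2 * (n + 1)) * radialMean (n + 1) (lap u) x t) t := by
  have hud : Continuous (fderiv ℝ u) := hu.continuous_fderiv (by simp)
  have hdc : ∀ t : ℝ, Continuous fun y : Euc d => fderiv ℝ u (x + t • y) y := fun t =>
    (hud.comp (by fun_prop)).clm_apply continuous_id
  obtain ⟨C, hC⟩ := (isCompact_closedBall x (|t| + 1)).exists_bound_of_continuousOn
    hud.continuousOn
  have h1 := (hasDerivAt_integral_of_dominated_loc_of_deriv_le (μ := (volume : Measure (Euc d)))
    (F := fun t y => radialKernel n y * u (x + t • y))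
    (F' := fun t y => radialKernel n y * fderiv ℝ u (x + t • y) y)
    (bound := fun y => radialKernel n y * C) (x₀ := t) (s := ball t 1)
    (ball_mem_nhds t one_pos)
    (Eventually.of_forall fun t => (integrable_radialKernel_mul hn
      (hu.continuous.comp (by fun_prop))).aestronglyMeasurable)
    (integrable_radialKernel_mul hn (hu.continuous.comp (by fun_prop)))
    (integrable_radialKernel_mul hn (hdc t)).aestronglyMeasurable
    (Eventually.of_forall fun y s hs => by
      rcases le_or_gt 1 ‖y‖ with hy | hy
      · simp [radialKernel_eq_zero hn hy]
      · rw [norm_mul, Real.norm_of_nonneg (radialKernel_nonneg n y)]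
        gcongr
        · exact radialKernel_nonneg n y
        have hs1 : |s| ≤ |t| + 1 := by
          have : |s - t| < 1 := by simpa [Real.dist_eq] using hs
          have := abs_sub_abs_le_abs_sub s t
          linarith
        have hmem : x + s • y ∈ closedBall x (|t| + 1) := by
          rw [mem_closedBall, dist_eq_norm, add_sub_cancel_left, norm_smul, Real.norm_eq_abs]
          nlinarith [abs_nonneg s, norm_nonneg y]
        have h2 := hC _ hmem
        calc _ ≤ ‖fderiv ℝ u (x + s • y)‖ * ‖y‖ := ContinuousLinearMap.le_opNorm _ _
          _ ≤ ‖fderiv ℝ u (x + s • y)‖ * 1 := by gcongr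
          _ ≤ C := by simpa using h2)
    (integrable_radialKernel_mul hn continuous_const)
    (Eventually.of_forall fun y s _ => by
      have h3 : HasDerivAt (fun s : ℝ => x + s • y) y s := by
        simpa using ((hasDerivAt_id s).smul_const y).const_add x
      exact (((hu.differentiable (by simp)) _).hasFDerivAt.comp_hasDerivAt s h3).const_mul _)).2
  refine h1.congr_deriv ?_
  have hpc : ∀ i, Continuous fun y => pder i u (x + t • y) := fun i =>
    (contDiff_pder hu i).continuous.comp (by fun_prop)
  have hppc : ∀ i, Continuous fun y => pder i (pder i u) (x + t • y) := fun i =>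
    (contDiff_pder (contDiff_pder hu i) i).continuous.comp (by fun_prop)
  simp only [fderiv_apply_eq_sum, Finset.mul_sum]
  have hic : ∀ i, Integrable fun y : Euc d =>
      radialKernel n y * (y i * pder i u (x + t • y)) := fun i =>
    integrable_radialKernel_mul hn ((show Continuous fun y : Euc d => y i by fun_prop).mul (hpc i))
  rw [integral_finsetSum _ fun i _ => hic i]
  simp only [integral_radialKernel_mul_coord hn (contDiff_pder hu _), radialMean, lap,
    Finset.mul_sum]
  rw [integral_finsetSum _ fun i _ => integrable_radialKernel_mul n.succ_ne_zero (hppc i),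
    Finset.mul_sum]

theorem radialMean_eq_zero {n : ℕ} (hn : n ≠ 0) {w : Euc d → ℝ} {x : Euc d} {s t : ℝ}
    (hs : 0 ≤ s) (hst : s ≤ t) (ht : 0 < t) (hw : ∀ z ∈ ball x t, w z = 0) :
    radialMean n w x s = 0 := by
  refine integral_eq_zero_of_ae (Eventually.of_forall fun y => ?_)
  rcases le_or_gt 1 ‖y‖ with hy | hy
  · simp [radialKernel_eq_zero hn hy]
  · have : x + s • y ∈ ball x t := by
      rw [mem_ball, dist_eq_norm, add_sub_cancel_left, norm_smul, Real.norm_of_nonneg hs]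
      nlinarith [norm_nonneg y]
    simp [hw _ this]

/-- A two-scale mean value formula for biharmonic functions. -/
theorem radialMean_of_bilap_eq_zero {n : ℕ} (hn : n ≠ 0) {v : Euc d → ℝ}
    (hv : ContDiff ℝ (⊤ : ℕ∞) v) {x : Euc d} {t : ℝ} (ht : 0 < t)
    (hb : ∀ z ∈ ball x t, bilap v z = 0) :
    4 * radialMean n v x (t / 2) - radialMean n v x t =
      3 * ((∫ y : Euc d, radialKernel n y) * v x) := by
  set κ := radialMean (n + 1) (lap v) x 0 with hκ
  have h1 : ∀ s ∈ Icc 0 t, radialMean (n + 1) (lap v) x s = κ :=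
    constant_of_has_deriv_right_zero
      (fun s _ => (hasDerivAt_radialMean n.succ_ne_zero (contDiff_lap hv) x
        s).continuousAt.continuousWithinAt)
      (fun s hs => by
        have h := hasDerivAt_radialMean n.succ_ne_zero (contDiff_lap hv) x s
        rw [radialMean_eq_zero (w := lap (lap v)) (by omega) hs.1 hs.2.le ht hb, mul_zero] at h
        exact h.hasDerivWithinAt)
  have h2 : ∀ s ∈ Icc 0 t, radialMean n v x s - s ^ 2 * (κ / (4 * (n + 1))) =
      radialMean n v x 0 - 0 ^ 2 * (κ / (4 * (n + 1))) := by
    have hder : ∀ s, HasDerivAt (fun s => radialMean n v x s - s ^ 2 * (κ / (4 * (n + 1))))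
        (s / (2 * (n + 1)) * radialMean (n + 1) (lap v) x s - 2 * s * (κ / (4 * (n + 1)))) s :=
      fun s => (hasDerivAt_radialMean hn hv x s).sub
        (by simpa using (hasDerivAt_pow 2 s).mul_const (κ / (4 * (n + 1) : ℝ)))
    refine constant_of_has_deriv_right_zero
      (fun s _ => (hder s).continuousAt.continuousWithinAt) (fun s hs => ?_)
    have h := hder s
    rw [h1 s ⟨hs.1, hs.2.le⟩] at h
    refine (h.congr_deriv ?_).hasDerivWithinAt
    have hpos : (0 : ℝ) < n + 1 := by positivity
    field_simp
    ring
  have e1 := h2 (t / 2) ⟨by positivity, by linarith⟩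
  have e2 := h2 t ⟨ht.le, le_rfl⟩
  rw [radialMean_zero] at e1 e2
  linarith

theorem lintegral_comp_add_smul {g : Euc d → ℝ≥0∞} (hg : Measurable g) (x : Euc d) {s : ℝ}
    (hs : 0 < s) :
    ∫⁻ y, g (x + s • y) = ENNReal.ofReal (s⁻¹ ^ d) * ∫⁻ z, g z := by
  have hg' : Measurable fun w => g (x + w) := hg.comp (measurable_const_add x)
  have h := lintegral_map (μ := (volume : Measure (Euc d))) hg' (measurable_const_smul s)
  rw [Measure.map_addHaar_smul _ hs.ne', lintegral_smul_measure, finrank_euclideanSpace_fin,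
    abs_of_pos (by positivity), lintegral_add_left_eq_self] at h
  rw [← h, inv_pow, smul_eq_mul]

theorem enorm_integral_radialKernel_le {u : Euc d → ℝ} (hu : Continuous u) (x : Euc d) {s t : ℝ}
    (hs : 0 < s) (hst : s ≤ t) (i : Fin d) :
    ‖∫ y, radialKernel 1 y * (y i * u (x + s • y))‖ₑ ≤
      ENNReal.ofReal (s⁻¹ ^ d) * ∫⁻ z in ball x t, ‖u z‖ₑ := by
  have hm : Measurable ((ball x t).indicator fun z => ‖u z‖ₑ) :=
    hu.measurable.enorm.indicator measurableSet_ball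
  rw [← lintegral_indicator measurableSet_ball, ← lintegral_comp_add_smul hm x hs]
  refine (enorm_integral_le_lintegral_enorm _).trans (lintegral_mono fun y => ?_)
  rcases le_or_gt 1 ‖y‖ with hy | hy
  · simp [radialKernel_eq_zero one_ne_zero hy]
  · have hmem : x + s • y ∈ ball x t := by
      rw [mem_ball, dist_eq_norm, add_sub_cancel_left, norm_smul, Real.norm_of_nonneg hs.le]
      nlinarith [norm_nonneg y]
    rw [indicator_of_mem hmem, ← mul_assoc, enorm_mul]
    refine mul_le_of_le_one_left' ?_
    rw [← ofReal_norm, ENNReal.ofReal_le_one, norm_mul,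
      Real.norm_of_nonneg (radialKernel_nonneg 1 y)]
    exact mul_le_one₀ (radialKernel_le_one 1 y) (norm_nonneg _)
      ((PiLp.norm_apply_le y i).trans hy.le)

theorem enorm_pder_le_of_contDiff (d : ℕ) :
    ∃ C : ℝ, 0 < C ∧ ∀ (u : Euc d → ℝ), ContDiff ℝ (⊤ : ℕ∞) u → ∀ (x : Euc d) (t : ℝ), 0 < t →
      (∀ z ∈ ball x t, bilap u z = 0) → ∀ i,
      ‖pder i u x‖ₑ ≤ ENNReal.ofReal (C * t⁻¹ ^ (d + 1)) * ∫⁻ z in ball x t, ‖u z‖ₑ := by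
  set c := ∫ y : Euc d, radialKernel 2 y with hc
  have hc0 : 0 < c := integral_radialKernel_pos two_ne_zero
  refine ⟨(32 * 2 ^ d + 4) / (3 * c), by positivity, fun u hu x t ht hb i => ?_⟩
  have hb' : ∀ z ∈ ball x t, bilap (pder i u) z = 0 :=
    (biharmonic_pder isOpen_ball ⟨hu.contDiffOn, hb⟩ i).2
  have h1 := radialMean_of_bilap_eq_zero two_ne_zero (contDiff_pder hu i) ht hb'
  have h2 : ∀ s : ℝ, 0 < s → radialMean 2 (pder i u) x s =
      4 / s * ∫ y, radialKernel 1 y * (y i * u (x + s • y)) := fun s hs => by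
    rw [integral_radialKernel_mul_coord one_ne_zero hu, radialMean]
    field_simp
    norm_num
    ring
  rw [← hc, h2 _ ht, h2 _ (half_pos ht)] at h1
  set L : ℝ → ℝ := fun s => ∫ y, radialKernel 1 y * (y i * u (x + s • y)) with hL
  have h3 : pder i u x = 32 / (3 * c * t) * L (t / 2) + -(4 / (3 * c * t)) * L t := by
    have h1' : 4 * (4 / (t / 2) * L (t / 2)) - 4 / t * L t = 3 * (c * pder i u x) := h1
    field_simp at h1' ⊢
    linarith
  set X := ∫⁻ z in ball x t, ‖u z‖ₑ with hX
  have e1 : ‖L (t / 2)‖ₑ ≤ ENNReal.ofReal ((t / 2)⁻¹ ^ d) * X :=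
    enorm_integral_radialKernel_le hu.continuous x (half_pos ht) (by linarith) i
  have e2 : ‖L t‖ₑ ≤ ENNReal.ofReal (t⁻¹ ^ d) * X :=
    enorm_integral_radialKernel_le hu.continuous x ht le_rfl i
  calc ‖pder i u x‖ₑ
      ≤ ‖32 / (3 * c * t) * L (t / 2)‖ₑ + ‖-(4 / (3 * c * t)) * L t‖ₑ := by
        rw [h3]; exact enorm_add_le _ _
    _ = ENNReal.ofReal (32 / (3 * c * t)) * ‖L (t / 2)‖ₑ +
        ENNReal.ofReal (4 / (3 * c * t)) * ‖L t‖ₑ := by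
        rw [enorm_mul, enorm_mul, enorm_neg,
          Real.enorm_of_nonneg (show 0 ≤ 32 / (3 * c * t) by positivity),
          Real.enorm_of_nonneg (show 0 ≤ 4 / (3 * c * t) by positivity)]
    _ ≤ ENNReal.ofReal (32 / (3 * c * t)) * (ENNReal.ofReal ((t / 2)⁻¹ ^ d) * X) +
        ENNReal.ofReal (4 / (3 * c * t)) * (ENNReal.ofReal (t⁻¹ ^ d) * X) := by
        gcongr
    _ = _ := by
        rw [← mul_assoc, ← mul_assoc, ← add_mul, ← ENNReal.ofReal_mul (by positivity),
          ← ENNReal.ofReal_mul (by positivity), ← ENNReal.ofReal_add (by positivity)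
          (by positivity)]
        congr 2
        rw [inv_div, div_pow, inv_pow, inv_pow]
        field_simp
        ring

/-- Interior gradient estimate for biharmonic functions. -/
theorem enorm_pder_le_of_biharmonic (d : ℕ) :
    ∃ C : ℝ, 0 < C ∧ ∀ (Ω : Set (Euc d)) (u : Euc d → ℝ), Biharmonic Ω u →
      ∀ (x : Euc d) (t : ℝ), 0 < t → ball x (2 * t) ⊆ Ω → ∀ i,
      ‖pder i u x‖ₑ ≤ ENNReal.ofReal (C * t⁻¹ ^ (d + 1)) * ∫⁻ z in ball x t, ‖u z‖ₑ := by
  obtain ⟨C, hC, h⟩ := enorm_pder_le_of_contDiff d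
  refine ⟨C, hC, fun Ω u hu x t ht hball i => ?_⟩
  let χ : ContDiffBump x := ⟨t, 3 / 2 * t, ht, by linarith⟩
  have hsm : ContDiff ℝ (⊤ : ℕ∞) fun z => χ z * u z := by
    refine contDiff_iff_contDiffAt.2 fun z => ?_
    by_cases hz : z ∈ ball x (2 * t)
    · exact χ.contDiffAt.mul ((hu.1.mono hball).contDiffAt (isOpen_ball.mem_nhds hz))
    · have hz1 : z ∉ tsupport χ := by
        rw [χ.tsupport_eq, mem_closedBall]
        rw [mem_ball] at hz
        change ¬ dist z x ≤ 3 / 2 * t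
        linarith
      refine (contDiffAt_const (c := (0 : ℝ))).congr_of_eventuallyEq ?_
      filter_upwards [notMem_tsupport_iff_eventuallyEq.1 hz1] with w hw
      simp [hw]
  have heq : EqOn (fun z => χ z * u z) u (ball x t) := fun z hz => by
    simp [χ.one_of_mem_closedBall (ball_subset_closedBall hz)]
  have hb : ∀ z ∈ ball x t, bilap (fun z => χ z * u z) z = 0 := fun z hz => by
    rw [bilap, lap_eqOn isOpen_ball (lap_eqOn isOpen_ball heq) hz]
    exact hu.2 z (hball (ball_subset_ball (by linarith) hz))
  have := h _ hsm x t ht hb i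
  rw [pder_eqOn isOpen_ball heq i (mem_ball_self ht)] at this
  refine this.trans_eq ?_
  congr 1
  exact setLIntegral_congr_fun measurableSet_ball fun z hz => by
    rw [show χ z * u z = u z from heq hz]

theorem pdLast_eq_pder (hd : 0 < d) (u : Euc d → ℝ) :
    pdLast u = pder ⟨d - 1, Nat.sub_lt hd one_pos⟩ u := by
  funext x; simp [pdLast, pder, vertDir, hd]

theorem norm_vertDir (hd : 0 < d) : ‖vertDir d‖ = 1 := by
  simp [vertDir, hd]

theorem dist_add_smul_vertDir (hd : 0 < d) (x : Euc d) (s : ℝ) :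
    dist (x + s • vertDir d) x = |s| := by
  rw [dist_eq_norm, add_sub_cancel_left, norm_smul, norm_vertDir hd, mul_one, Real.norm_eq_abs]

theorem vertCoord_add_smul_vertDir (hd : 0 < d) (x : Euc d) (s : ℝ) :
    vertCoord d (x + s • vertDir d) = vertCoord d x + s := by
  simp [vertCoord, vertDir, hd]

theorem graphCoord_add_smul_vertDir (hd : 0 < d) (x : Euc d) (s : ℝ) :
    graphCoord d (x + s • vertDir d) = graphCoord d x := by
  ext i
  have hne : (Fin.castLE (Nat.sub_le d 1) i : Fin d) ≠ ⟨d - 1, Nat.sub_lt hd one_pos⟩ := by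
    intro h
    have h1 := congrArg Fin.val h
    have h2 := i.2
    simp at h1
    omega
  simp [graphCoord, vertDir, hd, hne]

theorem abs_vertCoord_sub_le (hd : 0 < d) (x y : Euc d) :
    |vertCoord d x - vertCoord d y| ≤ dist x y := by
  simp only [vertCoord, hd, dif_pos, dist_eq_norm]
  simpa using PiLp.norm_apply_le (x - y) ⟨d - 1, Nat.sub_lt hd one_pos⟩

theorem dist_graphCoord_le (x y : Euc d) : dist (graphCoord d x) (graphCoord d y) ≤ dist x y := by
  rw [EuclideanSpace.dist_eq, EuclideanSpace.dist_eq]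
  refine Real.sqrt_le_sqrt ?_
  let e : Fin (d - 1) ↪ Fin d := Fin.castLEEmb (Nat.sub_le d 1)
  calc ∑ i, dist (graphCoord d x i) (graphCoord d y i) ^ 2
      = ∑ j ∈ Finset.univ.map e, dist (x j) (y j) ^ 2 := by
        rw [Finset.sum_map]; rfl
    _ ≤ _ := Finset.sum_le_univ_sum_of_nonneg fun j => by positivity

theorem ball_infDist_frontier_subset {Ω : Set (Euc d)} (hΩ : IsOpen Ω) {x : Euc d} (hx : x ∈ Ω) :
    ball x (infDist x (frontier Ω)) ⊆ Ω := by
  rcases le_or_gt (infDist x (frontier Ω)) 0 with h0 | h0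
  · simp [ball_eq_empty.2 h0]
  refine (convex_ball x _).isPreconnected.subset_left_of_subset_union hΩ
    isClosed_closure.isOpen_compl (disjoint_compl_right.mono_left subset_closure)
    (fun y hy => ?_) ⟨x, mem_ball_self h0, hx⟩
  by_contra hyn
  rw [mem_union, mem_compl_iff, not_or, not_not] at hyn
  have hyf : y ∈ frontier Ω := hΩ.frontier_eq ▸ ⟨hyn.2, hyn.1⟩
  have h1 := infDist_le_dist_of_mem (x := x) hyf
  rw [mem_ball'] at hy
  linarith

theorem le_dist_of_ball_subset {Ω : Set (Euc d)} (hΩ : IsOpen Ω) {z w : Euc d} {t : ℝ}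
    (h : ball z t ⊆ Ω) (hw : w ∈ frontier Ω) : t ≤ dist z w := by
  by_contra hlt
  have : w ∈ Ω := h (by rw [mem_ball']; linarith)
  rw [hΩ.frontier_eq] at hw
  exact hw.2 this

theorem le_infDist_of_ball_subset {Ω : Set (Euc d)} (hΩ : IsOpen Ω) {z : Euc d} {t : ℝ}
    (hne : (frontier Ω).Nonempty) (h : ball z t ⊆ Ω) : t ≤ infDist z (frontier Ω) :=
  (le_infDist hne).2 fun _ hw => le_dist_of_ball_subset hΩ h hw

/-- Balls about the points above `x`, of radius comparable to the distance to `Q`, stay inside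
a graph domain if `x` lies in a nontangential cone with vertex `Q`. -/
theorem ball_add_smul_vertDir_subset (hd : 0 < d) {Ω : Set (Euc d)} (hΩ : IsOpen Ω)
    {P Q x : Euc d} {r C₁ : ℝ} (hr : 0 < r) (h10 : 10 < C₁) {η : Euc (d - 1) → ℝ} {M : ℝ≥0} (hη : LipschitzWith M η)
    (hgraph : ball P (C₁ * r) ∩ Ω =
      ball P (C₁ * r) ∩ {x | η (graphCoord d x) < vertCoord d x})
    (hQP : dist Q P < 5 * r) (hx : x ∈ Ω)
    (hxQ : dist x Q < 2 * infDist x (frontier Ω)) (hxr : dist x Q < r)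
    {s : ℝ} (hs0 : 0 ≤ s) (hsr : s ≤ r) :
    ball (x + s • vertDir d) (1 / (2 * (1 + M)) * (dist x Q + s)) ⊆ Ω := by
  set ρ := dist x Q with hρ
  have hρ0 : 0 ≤ ρ := dist_nonneg
  have hM : (0 : ℝ) ≤ M := M.2
  have hC₁ : 10 * r < C₁ * r := by gcongr
  have hxP : dist x P < 5 * r + ρ := by
    have := dist_triangle x Q P
    linarith
  have hlow : η (graphCoord d x) < vertCoord d x - ρ / 2 := by
    have h1 : dist (x + (-(ρ / 2)) • vertDir d) x = ρ / 2 := by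
      rw [dist_add_smul_vertDir hd, abs_neg, abs_of_nonneg (by positivity)]
    have h2 : x + (-(ρ / 2)) • vertDir d ∈ Ω :=
      ball_infDist_frontier_subset hΩ hx (by rw [mem_ball, h1]; linarith)
    have h3 : x + (-(ρ / 2)) • vertDir d ∈ ball P (C₁ * r) := by
      have := dist_triangle (x + (-(ρ / 2)) • vertDir d) x P
      rw [mem_ball]; linarith
    have h4 : x + (-(ρ / 2)) • vertDir d ∈
        ball P (C₁ * r) ∩ {x | η (graphCoord d x) < vertCoord d x} := hgraph ▸ ⟨h3, h2⟩
    have h5 := h4.2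
    rw [mem_ofPred_eq, graphCoord_add_smul_vertDir hd, vertCoord_add_smul_vertDir hd] at h5
    linarith
  intro z hz
  set τ := 1 / (2 * (1 + (M : ℝ))) * (ρ + s) with hτ
  rw [mem_ball] at hz
  have hτ1 : (1 + M) * τ = (ρ + s) / 2 := by
    rw [hτ]; field_simp
  have hτ0 : 0 ≤ τ := by positivity
  have hτ2 : τ ≤ (ρ + s) / 2 := by nlinarith
  have hzP : z ∈ ball P (C₁ * r) := by
    have h1 := dist_triangle z (x + s • vertDir d) P
    have h2 := dist_triangle (x + s • vertDir d) x P
    rw [dist_add_smul_vertDir hd, abs_of_nonneg hs0] at h2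
    rw [mem_ball]; linarith
  have hv : vertCoord d x + s - τ < vertCoord d z := by
    have h1 := (abs_vertCoord_sub_le hd z (x + s • vertDir d)).trans_lt hz
    rw [vertCoord_add_smul_vertDir hd] at h1
    linarith [(abs_lt.1 h1).1]
  have hg : η (graphCoord d z) ≤ η (graphCoord d x) + M * τ := by
    have h1 := hη.dist_le_mul (graphCoord d z) (graphCoord d (x + s • vertDir d))
    have h2 := (dist_graphCoord_le z (x + s • vertDir d)).trans hz.le
    rw [graphCoord_add_smul_vertDir hd] at h1 h2
    have h3 : M * dist (graphCoord d z) (graphCoord d x) ≤ M * τ := by gcongr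
    have h4 := (abs_le.1 ((Real.dist_eq _ _ ▸ h1).trans h3)).2
    linarith
  have hmem : z ∈ ball P (C₁ * r) ∩ {x | η (graphCoord d x) < vertCoord d x} := by
    refine ⟨hzP, ?_⟩
    rw [mem_ofPred_eq]
    nlinarith
  rw [← hgraph] at hmem
  exact hmem.2

theorem enorm_le_add_lintegral_pdLast (hd : 0 < d) {Ω : Set (Euc d)} (hΩ : IsOpen Ω)
    {f : Euc d → ℝ} (hf : ContDiffOn ℝ (⊤ : ℕ∞) f Ω) {x : Euc d} {r : ℝ} (hr : 0 ≤ r)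
    (hseg : ∀ s ∈ Icc 0 r, x + s • vertDir d ∈ Ω) :
    ‖f x‖ₑ ≤ ‖f (x + r • vertDir d)‖ₑ +
      ∫⁻ s in Ioc 0 r, ‖pdLast f (x + s • vertDir d)‖ₑ := by
  have hder : ∀ s ∈ uIcc 0 r, HasDerivAt (fun s : ℝ => f (x + s • vertDir d))
      (pdLast f (x + s • vertDir d)) s := by
    intro s hs
    rw [uIcc_of_le hr] at hs
    have h3 : HasDerivAt (fun s : ℝ => x + s • vertDir d) (vertDir d) s := by
      simpa using ((hasDerivAt_id s).smul_const (vertDir d)).const_add x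
    exact ((hf.contDiffAt (hΩ.mem_nhds (hseg s hs))).differentiableAt
      (by simp)).hasFDerivAt.comp_hasDerivAt s h3
  have hc : ContinuousOn (fun s : ℝ => pdLast f (x + s • vertDir d)) (uIcc 0 r) := by
    rw [uIcc_of_le hr, pdLast_eq_pder hd]
    exact (contDiffOn_pder hΩ hf _).continuousOn.comp
      (Continuous.continuousOn (by fun_prop)) hseg
  have h := intervalIntegral.integral_eq_sub_of_hasDerivAt hder hc.intervalIntegrable
  rw [zero_smul, add_zero, intervalIntegral.integral_of_le hr] at h
  have h1 : f x = f (x + r • vertDir d) - ∫ s in Ioc 0 r, pdLast f (x + s • vertDir d) := by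
    rw [h]; ring
  calc ‖f x‖ₑ = ‖f (x + r • vertDir d) - ∫ s in Ioc 0 r, pdLast f (x + s • vertDir d)‖ₑ :=
        congrArg _ h1
    _ ≤ _ := enorm_sub_le.trans (add_le_add le_rfl (enorm_integral_le_lintegral_enorm _))

theorem lintegral_lintegral_indicator_le {Q : Euc d} {W : Euc d → ℝ≥0∞} (hW : Measurable W)
    (A r : ℝ) :
    ∫⁻ s in Ioc 0 r, ∫⁻ z, {z | s ≤ A * dist z Q}.indicator W z ≤
      ∫⁻ z, ENNReal.ofReal (A * dist z Q) * W z := by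
  set E : Set (ℝ × Euc d) := {p | p.1 ≤ A * dist p.2 Q} with hE
  have hmE : MeasurableSet E :=
    measurableSet_le measurable_fst ((measurable_snd.dist measurable_const).const_mul A)
  have hm : Measurable (E.indicator fun p => W p.2) := (hW.comp measurable_snd).indicator hmE
  calc ∫⁻ s in Ioc 0 r, ∫⁻ z, {z | s ≤ A * dist z Q}.indicator W z
      = ∫⁻ s in Ioc 0 r, ∫⁻ z, E.indicator (fun p => W p.2) (s, z) := rfl
    _ = ∫⁻ z, ∫⁻ s in Ioc 0 r, E.indicator (fun p => W p.2) (s, z) :=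
        lintegral_lintegral_swap hm.aemeasurable
    _ ≤ _ := by
        refine lintegral_mono fun z => ?_
        calc ∫⁻ s in Ioc 0 r, E.indicator (fun p => W p.2) (s, z)
            = ∫⁻ s in Ioc 0 r, (Iic (A * dist z Q)).indicator (fun _ => W z) s := rfl
          _ = W z * volume (Iic (A * dist z Q) ∩ Ioc 0 r) := by
              rw [lintegral_indicator_const measurableSet_Iic,
                Measure.restrict_apply measurableSet_Iic]
          _ ≤ W z * volume (Ioc 0 (A * dist z Q)) := by
              gcongr
              exact fun s hs => ⟨hs.2.1, hs.1⟩
          _ = _ := by rw [Real.volume_Ioc, sub_zero, mul_comm]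

theorem enorm_pder_le_gnorm1 (u : Euc d → ℝ) (j : Fin d) (x : Euc d) :
    ‖pder j u x‖ₑ ≤ ‖gnorm1 u x‖ₑ := by
  refine enorm_le_iff_norm_le.2 ?_
  rw [gnorm1, Real.norm_eq_abs, Real.norm_of_nonneg (Real.sqrt_nonneg _), ← Real.sqrt_sq_eq_abs]
  exact Real.sqrt_le_sqrt (Finset.single_le_sum (f := fun i => (pder i u x) ^ 2)
    (fun i _ => sq_nonneg _) (Finset.mem_univ j))

theorem enorm_gnorm2_le (u : Euc d → ℝ) (x : Euc d) {B : ℝ≥0∞}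
    (hB : ∀ i j, ‖pder i (pder j u) x‖ₑ ≤ B) : ‖gnorm2 u x‖ₑ ≤ (d * d : ℝ≥0∞) * B := by
  have h1 : ‖gnorm2 u x‖ ≤ ∑ i, ∑ j, ‖pder i (pder j u) x‖ := by
    rw [gnorm2, Real.norm_of_nonneg (Real.sqrt_nonneg _)]
    refine Real.sqrt_le_iff.2 ⟨by positivity, ?_⟩
    calc ∑ i, ∑ j, pder i (pder j u) x ^ 2
        ≤ ∑ i, (∑ j, ‖pder i (pder j u) x‖) ^ 2 := by
          gcongr with i
          simpa using Finset.sum_sq_le_sq_sum_of_nonneg (s := Finset.univ)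
            (f := fun j => ‖pder i (pder j u) x‖) fun j _ => norm_nonneg _
      _ ≤ _ := Finset.sum_sq_le_sq_sum_of_nonneg fun i _ => by positivity
  calc ‖gnorm2 u x‖ₑ ≤ ∑ i, ∑ j, ‖pder i (pder j u) x‖ₑ := by
        rw [← ofReal_norm]
        refine (ENNReal.ofReal_le_ofReal h1).trans_eq ?_
        rw [ENNReal.ofReal_sum_of_nonneg fun i _ => by positivity]
        refine Finset.sum_congr rfl fun i _ => ?_
        rw [ENNReal.ofReal_sum_of_nonneg fun i _ => by positivity]
        simp only [ofReal_norm]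
    _ ≤ ∑ _i : Fin d, ∑ _j : Fin d, B := by gcongr with i _ j; exact hB i j
    _ = _ := by simp [mul_assoc]

theorem measurable_gnorm1 (u : Euc d → ℝ) : Measurable (gnorm1 u) := by
  refine Measurable.sqrt (Finset.measurable_sum _ fun i _ => Measurable.pow_const ?_ 2)
  exact measurable_fderiv_apply_const ℝ u _

theorem pdLast_pder_pder (hd : 0 < d) {Ω : Set (Euc d)} (hΩ : IsOpen Ω) {u : Euc d → ℝ}
    (hu : ContDiffOn ℝ (⊤ : ℕ∞) u Ω) (i j : Fin d) :
    EqOn (pdLast (pder i (pder j u))) (pder i (pder j (pdLast u))) Ω := by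
  simp only [pdLast_eq_pder hd]
  exact (pder_comm hΩ (contDiffOn_pder hΩ hu j) _ i).trans
    (pder_eqOn hΩ (pder_comm hΩ hu _ j) i)

theorem measurableSet_cone {Ω : Set (Euc d)} (hΩ : IsOpen Ω) (Q : Euc d) (b h : ℝ) :
    MeasurableSet {x | x ∈ Ω ∧ dist x Q < b * infDist x (frontier Ω) ∧ dist x Q < h} := by
  have h1 : IsOpen {x | dist x Q < b * infDist x (frontier Ω)} :=
    isOpen_lt (by fun_prop) ((continuous_infDist_pt _).const_mul _)
  exact (hΩ.inter (h1.inter (isOpen_ball (x := Q) (ε := h)))).measurableSet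

/-- Integrating an interior estimate along the vertical segment above a point of a cone gives a
Hardy-type integral over a larger cone. -/
theorem lintegral_segment_le (hd : 0 < d) {C c r : ℝ} (hC : 0 < C) (hc : 0 < c) (hc1 : c ≤ 1 / 2)
    {Ω : Set (Euc d)} (hΩ : IsOpen Ω) {x Q : Euc d} (hQ : Q ∈ frontier Ω)
    (hxQ : 0 < dist x Q) (hxr : dist x Q < r)
    (hball : ∀ s ∈ Icc 0 r, ball (x + s • vertDir d) (c * (dist x Q + s)) ⊆ Ω)
    {G F : Euc d → ℝ≥0∞} (hF : Measurable F)
    (hG : ∀ y t, 0 < t → ball y (2 * t) ⊆ Ω →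
      G y ≤ ENNReal.ofReal (C * t⁻¹ ^ (d + 1)) * ∫⁻ z in ball y t, F z) :
    ∫⁻ s in Ioc 0 r, G (x + s • vertDir d) ≤
      ENNReal.ofReal (2 / c * (C * (8 / c) ^ (d + 1))) *
        ∫⁻ z in {z | dist x Q ≤ 2 / c * dist z Q},
          {z | z ∈ Ω ∧ dist z Q < 8 / c * infDist z (frontier Ω) ∧ dist z Q < 5 * r}.indicator F z *
            edist z Q ^ (-(d : ℝ)) := by
  set γ : Set (Euc d) :=
    {z | z ∈ Ω ∧ dist z Q < 8 / c * infDist z (frontier Ω) ∧ dist z Q < 5 * r} with hγ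
  set ρ := dist x Q with hρ
  set E : Set (Euc d) := {z | ρ ≤ 2 / c * dist z Q} with hE
  have hmγ : MeasurableSet γ := measurableSet_cone hΩ Q _ _
  have hmE : MeasurableSet E := (isClosed_le (by fun_prop) (by fun_prop)).measurableSet
  set W : Euc d → ℝ≥0∞ := fun z =>
    ENNReal.ofReal (C * (8 / c * (dist z Q)⁻¹) ^ (d + 1)) * E.indicator (γ.indicator F) z with hW
  have hmW : Measurable W := by
    refine Measurable.mul ?_ ((hF.indicator hmγ).indicator hmE)
    refine ENNReal.measurable_ofReal.comp (Measurable.const_mul (Measurable.pow_const ?_ _) _)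
    exact (measurable_id.dist measurable_const).inv.const_mul _
  have hpt : ∀ s ∈ Ioc 0 r, G (x + s • vertDir d) ≤
      ∫⁻ z, {z | s ≤ 2 / c * dist z Q}.indicator W z := by
    intro s hs
    set y := x + s • vertDir d with hy
    set τ := c / 4 * (ρ + s) with hτ
    have hs0 : 0 < s := hs.1
    have hτ0 : 0 < τ := by positivity
    have hτc : 4 / c * τ = ρ + s := by rw [hτ]; field_simp
    have hb : ball y (4 * τ) ⊆ Ω := by
      have := hball s ⟨hs.1.le, hs.2⟩
      rwa [show c * (ρ + s) = 4 * τ by rw [hτ]; ring] at this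
    refine (hG y τ hτ0 ((ball_subset_ball (by linarith)).trans hb)).trans ?_
    rw [← lintegral_const_mul _ hF, ← lintegral_indicator measurableSet_ball]
    refine lintegral_mono fun z => ?_
    by_cases hz : z ∈ ball y τ
    swap
    · rw [indicator_of_notMem hz]; exact zero_le
    have hzb : ball z (3 * τ) ⊆ Ω := by
      refine (ball_subset_ball' ?_).trans hb
      rw [mem_ball] at hz; linarith
    have h3 : 3 * τ ≤ dist z Q := le_dist_of_ball_subset hΩ hzb hQ
    have h3' : 3 * τ ≤ infDist z (frontier Ω) := le_infDist_of_ball_subset hΩ ⟨Q, hQ⟩ hzb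
    have hτ1 : τ ≤ ρ + s := by rw [hτ]; nlinarith
    have hzQ : dist z Q < 2 * (ρ + s) := by
      have h1 := dist_triangle z y Q
      have h2 := dist_triangle y x Q
      rw [hy, dist_add_smul_vertDir hd, abs_of_pos hs.1, ← hy] at h2
      rw [mem_ball] at hz
      linarith
    have hzQ' : dist z Q < 8 / c * τ := by
      have : 8 / c * τ = 2 * (4 / c * τ) := by ring
      rw [this, hτc]; exact hzQ
    have hA : ρ + s ≤ 2 / c * dist z Q := by
      rw [← hτc]
      calc 4 / c * τ = 2 / c * (2 * τ) := by ring
        _ ≤ _ := by gcongr; linarith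
    have hzγ : z ∈ γ := by
      refine ⟨hzb (mem_ball_self (by positivity)), hzQ'.trans_le ?_, ?_⟩
      · gcongr; linarith
      · have := hs.2
        linarith
    have hzE : z ∈ E := by rw [hE, mem_ofPred_eq]; linarith
    have hzs : z ∈ {z | s ≤ 2 / c * dist z Q} := by rw [mem_ofPred_eq]; linarith
    rw [indicator_of_mem hz, indicator_of_mem hzs, hW]
    simp only
    rw [indicator_of_mem hzE, indicator_of_mem hzγ]
    have hzQ0 : 0 < dist z Q := by linarith
    gcongr
    rw [inv_le_iff_one_le_mul₀ hτ0, mul_assoc, mul_comm _ τ, ← mul_assoc, ← div_eq_mul_inv,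
      one_le_div hzQ0]
    exact hzQ'.le
  calc ∫⁻ s in Ioc 0 r, G (x + s • vertDir d)
      ≤ ∫⁻ s in Ioc 0 r, ∫⁻ z, {z | s ≤ 2 / c * dist z Q}.indicator W z :=
        setLIntegral_mono' measurableSet_Ioc hpt
    _ ≤ ∫⁻ z, ENNReal.ofReal (2 / c * dist z Q) * W z := lintegral_lintegral_indicator_le hmW _ _
    _ = ∫⁻ z, ENNReal.ofReal (2 / c * (C * (8 / c) ^ (d + 1))) *
          E.indicator (fun z => γ.indicator F z * edist z Q ^ (-(d : ℝ))) z := by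
        refine lintegral_congr fun z => ?_
        by_cases hz : z ∈ E
        swap
        · simp [hW, hz]
        have hz0 : 0 < dist z Q := by
          rw [hE, mem_ofPred_eq] at hz
          by_contra h
          have : dist z Q = 0 := le_antisymm (not_lt.1 h) dist_nonneg
          rw [this, mul_zero] at hz
          linarith
        rw [indicator_of_mem hz, hW]
        simp only
        rw [indicator_of_mem hz, edist_dist, ENNReal.ofReal_rpow_of_pos hz0,
          mul_comm (γ.indicator F z), ← mul_assoc, ← mul_assoc, ← ENNReal.ofReal_mul (by positivity),
          ← ENNReal.ofReal_mul (by positivity)]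
        congr 2
        rw [Real.rpow_neg hz0.le, Real.rpow_natCast]
        rw [mul_pow, inv_pow, pow_succ (dist z Q)]
        field_simp
    _ = _ := by
        rw [lintegral_const_mul' _ _ ENNReal.ofReal_ne_top, lintegral_indicator hmE]

theorem enorm_gnorm2_le_add (hd : 0 < d) {C c r : ℝ} (hC : 0 < C)
    (hint : ∀ (Ω : Set (Euc d)) (u : Euc d → ℝ), Biharmonic Ω u → ∀ x t, 0 < t →
      ball x (2 * t) ⊆ Ω → ∀ i,
        ‖pder i u x‖ₑ ≤ ENNReal.ofReal (C * t⁻¹ ^ (d + 1)) * ∫⁻ z in ball x t, ‖u z‖ₑ)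
    (hc : 0 < c) (hc1 : c ≤ 1 / 2) {Ω : Set (Euc d)} (hΩ : IsOpen Ω) {u : Euc d → ℝ}
    (hu : Biharmonic Ω u) {x Q : Euc d} (hQ : Q ∈ frontier Ω)
    (hxQ : 0 < dist x Q) (hxr : dist x Q < r)
    (hball : ∀ s ∈ Icc 0 r, ball (x + s • vertDir d) (c * (dist x Q + s)) ⊆ Ω) :
    ‖gnorm2 u x‖ₑ ≤ (d * d : ℝ≥0∞) *
      (ENNReal.ofReal (C * (c / 4 * r)⁻¹ ^ (d + 1)) * volume (ball (0 : Euc d) (c / 4 * r)) *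
          (⨆ z ∈ closure Ω ∩ {z | c / 4 * r ≤ infDist z (frontier Ω)}, ‖gnorm1 u z‖ₑ) +
        ENNReal.ofReal (2 / c * (C * (8 / c) ^ (d + 1))) *
          ∫⁻ z in {z | dist x Q ≤ 2 / c * dist z Q},
            {z | z ∈ Ω ∧ dist z Q < 8 / c * infDist z (frontier Ω) ∧
              dist z Q < 5 * r}.indicator (fun z => ‖gnorm1 (pdLast u) z‖ₑ) z *
                edist z Q ^ (-(d : ℝ))) := by
  refine enorm_gnorm2_le u x fun i j => ?_
  have hr : 0 < r := hxQ.trans hxr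
  have hτ : 0 < c / 4 * r := by positivity
  have hseg : ∀ s ∈ Icc 0 r, x + s • vertDir d ∈ Ω := fun s hs =>
    hball s hs (mem_ball_self (mul_pos hc (add_pos_of_pos_of_nonneg hxQ hs.1)))
  refine (enorm_le_add_lintegral_pdLast hd hΩ
    (contDiffOn_pder hΩ (contDiffOn_pder hΩ hu.1 j) i) hr.le hseg).trans (add_le_add ?_ ?_)
  · set y := x + r • vertDir d
    have hb : ball y (4 * (c / 4 * r)) ⊆ Ω :=
      (ball_subset_ball (by nlinarith)).trans (hball r ⟨hr.le, le_rfl⟩)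
    refine (hint Ω _ (biharmonic_pder hΩ hu j) y _ hτ
      ((ball_subset_ball (by linarith)).trans hb) i).trans ?_
    rw [mul_assoc]
    gcongr
    rw [mul_comm (volume _), ← Measure.addHaar_ball_center volume y, ← setLIntegral_const]
    refine setLIntegral_mono' measurableSet_ball fun z hz => ?_
    have hzb : ball z (c / 4 * r) ⊆ Ω := by
      refine (ball_subset_ball' ?_).trans hb
      rw [mem_ball] at hz; linarith
    refine (enorm_pder_le_gnorm1 u j z).trans
      (le_iSup₂ (f := fun z _ => ‖gnorm1 u z‖ₑ) z ⟨subset_closure (hzb (mem_ball_self hτ)), ?_⟩)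
    exact le_infDist_of_ball_subset hΩ ⟨Q, hQ⟩ hzb
  · have hcongr : ∫⁻ s in Ioc 0 r, ‖pdLast (pder i (pder j u)) (x + s • vertDir d)‖ₑ =
        ∫⁻ s in Ioc 0 r, ‖pder i (pder j (pdLast u)) (x + s • vertDir d)‖ₑ :=
      setLIntegral_congr_fun measurableSet_Ioc fun s hs => by
        rw [pdLast_pder_pder hd hΩ hu.1 i j (hseg s (Ioc_subset_Icc_self hs))]
    rw [hcongr]
    have hv : Biharmonic Ω (pdLast u) := by
      rw [pdLast_eq_pder hd]; exact biharmonic_pder hΩ hu _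
    refine lintegral_segment_le (G := fun y => ‖pder i (pder j (pdLast u)) y‖ₑ) hd hC hc hc1 hΩ hQ
      hxQ hxr hball (measurable_gnorm1 _).enorm fun y t ht hyt => ?_
    refine (hint Ω _ (biharmonic_pder hΩ hv j) y t ht hyt i).trans ?_
    gcongr with z
    exact enorm_pder_le_gnorm1 _ j z

/-- The points of the closure of a bounded set at distance at least `t` from its boundary form a
compact set. -/
theorem isCompact_closure_inter_le_infDist {Ω : Set (Euc d)} (hb : Bornology.IsBounded Ω) (t : ℝ) :
    IsCompact (closure Ω ∩ {z | t ≤ infDist z (frontier Ω)}) :=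
  hb.isCompact_closure.inter_right (isClosed_le continuous_const (continuous_infDist_pt _))

theorem closure_inter_le_infDist_subset {Ω : Set (Euc d)} {t : ℝ} (ht : 0 < t) :
    closure Ω ∩ {z | t ≤ infDist z (frontier Ω)} ⊆ Ω := by
  intro z hz
  by_contra hzΩ
  have hzf : z ∈ frontier Ω := ⟨hz.1, fun h => hzΩ (interior_subset h)⟩
  have h2 : t ≤ infDist z (frontier Ω) := hz.2
  rw [infDist_zero_of_mem hzf] at h2
  linarith

/-- Lemma 2.1: pointwise comparison of the square function of the full
gradient `S(∇u)` with the square function `S̃(D_d u)` of the vertical derivative, for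
biharmonic `u`, near a boundary ball where `Ω` is the region above a Lipschitz graph. -/
theorem squareFunction_lastVariable
    (d : ℕ) (hd : 2 ≤ d) (Ω : Set (Euc d)) (hΩ : IsLipschitzDomain Ω)
    (P : Euc d) (hP : P ∈ frontier Ω) (r C₀ C₁ : ℝ) (hr : 0 < r)
    (h10 : 10 < C₁) (hC : C₁ < C₀) (hsub : Ω ⊆ ball P (C₀ * r))
    (η : Euc (d - 1) → ℝ) (M : ℝ≥0) (hη : LipschitzWith M η)
    (hgraph : ball P (C₁ * r) ∩ Ω =
      ball P (C₁ * r) ∩ {x | η (graphCoord d x) < vertCoord d x}) :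
    ∃ γ γ' : Euc d → Set (Euc d),
      IsRegularConeFamily Ω γ ∧ IsRegularConeFamily Ω γ' ∧
      ∃ K : Set (Euc d), IsCompact K ∧ K ⊆ Ω ∧ ∃ C : ℝ≥0,
        ∀ u : Euc d → ℝ, Biharmonic Ω u → ∀ Q ∈ ball P (5 * r) ∩ frontier Ω,
          sqFunOf γ (gnorm2 u) Q ≤
            C * (sqFunOf γ' (gnorm1 (pdLast u)) Q +
              ⨆ x ∈ K, (‖gnorm1 u x‖₊ : ℝ≥0∞)) := by
  have hd0 : 0 < d := by omega
  have hΩo : IsOpen Ω := hΩ.1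
  set c : ℝ := 1 / (2 * (1 + M)) with hc
  have hM : (0 : ℝ) ≤ M := M.2
  have hc0 : 0 < c := by positivity
  have hc1 : c ≤ 1 / 2 := by
    rw [hc]; gcongr; linarith
  obtain ⟨C, hC0, hint⟩ := enorm_pder_le_of_biharmonic d
  obtain ⟨CH, hCH⟩ := lintegral_hardy hd (show 0 < 2 / c by positivity)
  obtain ⟨CB, hCB⟩ := lintegral_closedBall_edist_rpow hd (α := 2) two_pos
  set γ : Euc d → Set (Euc d) := fun Q =>
    {x | x ∈ Ω ∧ dist x Q < 2 * infDist x (frontier Ω) ∧ dist x Q < r} with hγ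
  set γ' : Euc d → Set (Euc d) := fun Q =>
    {x | x ∈ Ω ∧ dist x Q < 8 / c * infDist x (frontier Ω) ∧ dist x Q < 5 * r} with hγ'
  set K := closure Ω ∩ {z | c / 4 * r ≤ infDist z (frontier Ω)} with hK
  set B₁ : ℝ≥0∞ := d * d * (ENNReal.ofReal (C * (c / 4 * r)⁻¹ ^ (d + 1)) *
    volume (ball (0 : Euc d) (c / 4 * r))) with hB₁
  set B₂ : ℝ≥0∞ := d * d * ENNReal.ofReal (2 / c * (C * (8 / c) ^ (d + 1))) with hB₂
  have hB₁t : B₁ ≠ ⊤ := by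
    have := (measure_ball_lt_top (μ := volume) (x := (0 : Euc d)) (r := c / 4 * r)).ne
    finiteness
  have hB₂t : B₂ ≠ ⊤ := by finiteness
  set D : ℝ≥0∞ := 2 * B₁ ^ 2 * (CB * ENNReal.ofReal r ^ (2 : ℝ)) + 2 * B₂ ^ 2 * CH with hD
  have hDt : D ≠ ⊤ := by
    have : ENNReal.ofReal r ^ (2 : ℝ) ≠ ⊤ := by finiteness
    finiteness
  have h8 : 2 ≤ 8 / c := by rw [le_div_iff₀ hc0]; linarith
  refine ⟨γ, γ', ⟨1, one_pos, r, hr, fun Q _ => by rw [one_add_one_eq_two]⟩,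
    ⟨8 / c - 1, by linarith, 5 * r, by positivity, fun Q _ => by rw [add_sub_cancel]⟩, K,
    isCompact_closure_inter_le_infDist hΩ.2.1 _, closure_inter_le_infDist_subset (by positivity),
    (D ^ (1 / 2 : ℝ)).toNNReal, fun u hu Q hQ => ?_⟩
  rw [ENNReal.coe_toNNReal (ENNReal.rpow_ne_top_of_nonneg (by norm_num) hDt)]
  simp only [← enorm_eq_nnnorm, sqFunOf]
  set Sup : ℝ≥0∞ := ⨆ x ∈ K, ‖gnorm1 u x‖ₑ with hSup
  set X : ℝ≥0∞ := ∫⁻ x in γ' Q, ‖gnorm1 (pdLast u) x‖ₑ ^ 2 * edist x Q ^ ((2 : ℝ) - d) with hX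
  set f : Euc d → ℝ≥0∞ := (γ' Q).indicator fun z => ‖gnorm1 (pdLast u) z‖ₑ with hf
  have hmγ' : MeasurableSet (γ' Q) := measurableSet_cone hΩo Q _ _
  have hmf : Measurable f := (measurable_gnorm1 _).enorm.indicator hmγ'
  set T : Euc d → ℝ≥0∞ := fun x =>
    ∫⁻ z in {z | dist x Q ≤ 2 / c * dist z Q}, f z * edist z Q ^ (-(d : ℝ)) with hT
  have hpt : ∀ x ∈ γ Q, ‖gnorm2 u x‖ₑ ≤ B₁ * Sup + B₂ * T x := by
    rintro x ⟨hxΩ, hx2, hxr⟩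
    have hxQ : 0 < dist x Q := dist_pos.2 fun h => (hΩo.frontier_eq ▸ hQ.2).2 (h ▸ hxΩ)
    refine (enorm_gnorm2_le_add hd0 hC0 hint hc0 hc1 hΩo hu hQ.2 hxQ hxr fun s hs =>
      ball_add_smul_vertDir_subset hd0 hΩo hr h10 hη hgraph hQ.1 hxΩ hx2 hxr hs.1 hs.2).trans_eq ?_
    change (d * d : ℝ≥0∞) * (_ * Sup + _ * T x) = _
    rw [hB₁, hB₂]; ring
  have hsup_int : ∫⁻ x in γ Q, edist x Q ^ ((2 : ℝ) - d) ≤ CB * ENNReal.ofReal r ^ (2 : ℝ) :=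
    (lintegral_mono_set fun x hx => hx.2.2.le).trans (hCB Q r hr)
  have hfX : ∫⁻ z, f z ^ 2 * edist z Q ^ ((2 : ℝ) - d) = X := by
    rw [hX, ← lintegral_indicator hmγ']
    refine lintegral_congr fun z => ?_
    by_cases hz : z ∈ γ' Q <;> simp [hf, hz]
  have hsq (a b : ℝ≥0∞) : (a + b) ^ 2 ≤ 2 * a ^ 2 + 2 * b ^ 2 := by
    have := ENNReal.rpow_add_le_mul_rpow_add_rpow a b (p := 2) (by norm_num)
    norm_num at this
    rwa [mul_add] at this
  have hmain : ∫⁻ x in γ Q, ‖gnorm2 u x‖ₑ ^ 2 * edist x Q ^ ((2 : ℝ) - d) ≤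
      D * (X ^ (1 / 2 : ℝ) + Sup) ^ (2 : ℝ) := by
    have hw : Measurable fun x => edist x Q ^ ((2 : ℝ) - d) :=
      (measurable_id.edist measurable_const).pow_const _
    calc ∫⁻ x in γ Q, ‖gnorm2 u x‖ₑ ^ 2 * edist x Q ^ ((2 : ℝ) - d)
        ≤ ∫⁻ x in γ Q, (2 * B₁ ^ 2 * Sup ^ 2 * edist x Q ^ ((2 : ℝ) - d) +
            2 * B₂ ^ 2 * (T x ^ 2 * edist x Q ^ ((2 : ℝ) - d))) := by
          refine setLIntegral_mono' (measurableSet_cone hΩo Q _ _) fun x hx => ?_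
          calc ‖gnorm2 u x‖ₑ ^ 2 * edist x Q ^ ((2 : ℝ) - d)
              ≤ (2 * (B₁ * Sup) ^ 2 + 2 * (B₂ * T x) ^ 2) * edist x Q ^ ((2 : ℝ) - d) := by
                gcongr
                exact (pow_le_pow_left' (hpt x hx) 2).trans (hsq _ _)
            _ = _ := by ring
      _ = 2 * B₁ ^ 2 * Sup ^ 2 * (∫⁻ x in γ Q, edist x Q ^ ((2 : ℝ) - d)) +
            2 * B₂ ^ 2 * ∫⁻ x in γ Q, T x ^ 2 * edist x Q ^ ((2 : ℝ) - d) := by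
          rw [lintegral_add_left (hw.const_mul _), lintegral_const_mul _ hw,
            lintegral_const_mul' _ _ (by finiteness)]
      _ ≤ 2 * B₁ ^ 2 * Sup ^ 2 * (CB * ENNReal.ofReal r ^ (2 : ℝ)) +
            2 * B₂ ^ 2 * (CH * X) := by
          gcongr
          rw [← hfX]
          exact (setLIntegral_le_lintegral _ _).trans (hCH Q f hmf)
      _ ≤ 2 * B₁ ^ 2 * (X ^ (1 / 2 : ℝ) + Sup) ^ (2 : ℝ) * (CB * ENNReal.ofReal r ^ (2 : ℝ)) +
            2 * B₂ ^ 2 * (CH * (X ^ (1 / 2 : ℝ) + Sup) ^ (2 : ℝ)) := by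
          gcongr
          · rw [← ENNReal.rpow_natCast]
            exact ENNReal.rpow_le_rpow le_add_self (by norm_num)
          · calc X = (X ^ (1 / 2 : ℝ)) ^ (2 : ℝ) := by rw [← ENNReal.rpow_mul]; norm_num
              _ ≤ _ := ENNReal.rpow_le_rpow le_self_add (by norm_num)
      _ = _ := by rw [hD]; ring
  calc (∫⁻ x in γ Q, ‖gnorm2 u x‖ₑ ^ 2 * edist x Q ^ ((2 : ℝ) - d)) ^ (1 / 2 : ℝ)
      ≤ (D * (X ^ (1 / 2 : ℝ) + Sup) ^ (2 : ℝ)) ^ (1 / 2 : ℝ) :=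
        ENNReal.rpow_le_rpow hmain (by norm_num)
    _ = _ := by
        rw [ENNReal.mul_rpow_of_nonneg _ _ (by norm_num), ← ENNReal.rpow_mul]
        norm_num

end
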